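/- Let G be a connected bridgeless finite simple cubic graph with n ≥ 8 vertices and m edges whose flow polynomial F(G,t) has only real roots, and write F(G,t) = Σ_{i=0}^{m−n+1} c_i t^i. Then for every i with 0 ≤ i ≤ m−n+1 one has b_i ≤ |c_i|, where the b_i are defined by Σ_{i=0}^{m−n+1} b_i t^i = (t+1)(t+2)^{n/2−2}(t+3)^2. -/

import Mathlib

open Polynomial

/-- The flow polynomial of a finite simple graph `G`:
`F(G,t) = Σ_{Z ⊆ E(G)} (−1)^{m−|Z|} t^{|Z|+c(Z)−n}`, where `c(Z)` is the number of
connected components of the spanning subgraph with edge set `Z`. -/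
noncomputable def flowPoly {V : Type} [Fintype V] (G : SimpleGraph V) : Polynomial ℤ :=
  ∑ Z ∈ G.edgeSet.toFinite.toFinset.powerset,
    (-1 : ℤ) ^ (G.edgeSet.toFinite.toFinset.card - Z.card) •
      (X : Polynomial ℤ) ^
        (Z.card + Nat.card (SimpleGraph.fromEdgeSet (↑Z : Set (Sym2 V))).ConnectedComponent
          - Fintype.card V)

/-- The number of edges of `G`. -/
noncomputable def edgeCount {V : Type} [Fintype V] (G : SimpleGraph V) : ℕ :=
  G.edgeSet.toFinite.toFinset.card

/-!
The degree and the top three coefficients of the flow polynomial `F` of a 3-edge-connected graph `G`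
are determined by its numbers of vertices, edges and 3-edge cuts. If `G` is cubic and every 3-edge
cut is the star of a vertex, they give `∑ (x - 3) ^ 2 = 9 - n` over the roots `x` of `F`. The roots
1 and 2 contribute 5, so real roots force `n = 4` and `F = (t - 1)(t - 2)(t - 3)`.

Any larger `G` has a cut of two or three edges with at least two vertices on either side.
Contracting either side turns `F` into a product of two flow polynomials divided by that of two
vertices joined by the edges of the cut, because the values of a nowhere-zero flow on such a cut
form a single orbit of the general linear group. Hence `F = (t - 1)(t - 2)^α (t - 3)^β` by
induction, and a parity argument shows that both sides of a smallest such cut have the root 3, so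
that `β ≥ 2`. Replacing further roots 3 by 2 only decreases the absolute values of the coefficients.
-/

/-- A finite multigraph on the vertex set `V` with edges indexed by `E`, each edge carrying an
arbitrary orientation. Loops count as deleted edges, so that contracting vertices keeps the index
type `E`. -/
structure Multigraph (V E : Type*) where
  fst : E → V
  snd : E → V

namespace Multigraph

open Finset Module
open scoped Classical symmDiff Matrix

variable {V W E M : Type*} [Fintype E] (G : Multigraph V E)

/-! ### Cuts and degrees -/

/-- The set of edges with exactly one endpoint in `S`. -/
noncomputable def cut (S : Finset V) : Finset E := {e | ¬(G.fst e ∈ S ↔ G.snd e ∈ S)}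

/-- The set of edges that are not loops. -/
noncomputable def links : Finset E := {e | G.fst e ≠ G.snd e}

/-- The number of links at the vertex `v`. -/
noncomputable def degree (v : V) : ℕ := #(G.cut {v})

/-- The multigraph obtained by identifying the vertices with the same image under `π`. -/
def map (π : V → W) : Multigraph W E := ⟨π ∘ G.fst, π ∘ G.snd⟩

variable {G}

lemma mem_cut {S : Finset V} {e : E} : e ∈ G.cut S ↔ ¬(G.fst e ∈ S ↔ G.snd e ∈ S) := by
  simp [cut]

lemma mem_links {e : E} : e ∈ G.links ↔ G.fst e ≠ G.snd e := by simp [links]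

lemma cut_empty : G.cut ∅ = ∅ := by ext e; simp [mem_cut]

lemma cut_subset_links (S : Finset V) : G.cut S ⊆ G.links := by
  intro e he
  rw [mem_links]
  intro h
  simp [mem_cut, h] at he

lemma cut_symmDiff [DecidableEq E] (S T : Finset V) : G.cut (S ∆ T) = G.cut S ∆ G.cut T := by
  ext e; simp only [mem_cut, mem_symmDiff]; tauto

lemma sum_cut_eq_sum_smul [AddCommGroup M] [Module (ZMod 2) M] (S : Finset V) (f : E → M) :
    ∑ e ∈ G.cut S, f e =
      ∑ e, ((if G.fst e ∈ S then (1 : ZMod 2) else 0) + if G.snd e ∈ S then 1 else 0) • f e := by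
  rw [cut, sum_filter]
  refine sum_congr rfl fun e _ => ?_
  by_cases hfst : G.fst e ∈ S <;> by_cases hsnd : G.snd e ∈ S <;>
    simp [hfst, hsnd, CharTwo.add_self_eq_zero]

/-- In characteristic two the edges inside `S` cancel in the sum over the stars of `S`. -/
lemma sum_cut [AddCommGroup M] [Module (ZMod 2) M] (S : Finset V) (f : E → M) :
    ∑ e ∈ G.cut S, f e = ∑ v ∈ S, ∑ e ∈ G.cut {v}, f e := by
  simp_rw [sum_cut_eq_sum_smul]
  rw [sum_comm]
  refine sum_congr rfl fun e _ => ?_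
  rw [← sum_smul, sum_add_distrib]
  simp

lemma card_cut_modEq_sum_degree (S : Finset V) : #(G.cut S) ≡ ∑ v ∈ S, G.degree v [MOD 2] := by
  rw [← ZMod.natCast_eq_natCast_iff]
  simpa [degree] using G.sum_cut S (fun _ => (1 : ZMod 2))

lemma card_cut_modEq_card {S : Finset V} (h : ∀ v ∈ S, G.degree v = 3) :
    #(G.cut S) ≡ #S [MOD 2] := by
  have hsum := G.card_cut_modEq_sum_degree S
  rw [sum_congr rfl h, sum_const, smul_eq_mul] at hsum
  unfold Nat.ModEq at *
  omega

lemma card_cut_pair [DecidableEq E] {u v : V} (h : u ≠ v) :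
    #(G.cut {u, v}) + 2 * #(G.cut {u} ∩ G.cut {v}) = G.degree u + G.degree v := by
  have hpair : ({u, v} : Finset V) = {u} ∆ {v} := by
    ext w; simp only [mem_insert, mem_singleton, mem_symmDiff]; grind
  rw [hpair, cut_symmDiff, symmDiff_eq_sup_sdiff_inf, sup_eq_union, inf_eq_inter,
    card_sdiff_of_subset (inter_subset_left.trans subset_union_left), degree, degree]
  have hunion := card_union_add_card_inter (G.cut {u}) (G.cut {v})
  have hinter := card_le_card ((inter_subset_left (s₁ := G.cut {u}) (s₂ := G.cut {v})).trans
    (subset_union_left (s₂ := G.cut {v})))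
  omega

variable [Fintype V]

lemma cut_compl (S : Finset V) : G.cut Sᶜ = G.cut S := by
  ext e; simp only [mem_cut, mem_compl]; tauto

lemma cut_univ : G.cut univ = ∅ := by ext e; simp [mem_cut]

lemma sum_degree : ∑ v, G.degree v = 2 * #G.links := by
  have hstar : ∀ e, #{v | e ∈ G.cut {v}} = if e ∈ G.links then 2 else 0 := by
    intro e
    split_ifs with he
    · rw [← card_pair (mem_links.1 he)]
      congr 1
      ext v
      have := mem_links.1 he
      simp only [mem_cut, mem_filter_univ, mem_singleton, mem_insert]
      grind
    · rw [card_eq_zero, filter_eq_empty_iff]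
      exact fun v _ hv => he (cut_subset_links _ hv)
  calc ∑ v, G.degree v = ∑ v, #{e | e ∈ G.cut {v}} := by simp [degree]
    _ = ∑ e, #{v | e ∈ G.cut {v}} := sum_card_bipartiteAbove_eq_sum_card_bipartiteBelow _
    _ = 2 * #G.links := by simp [hstar, mul_comm]

variable (G) in
/-- Every cut separating the vertex set has at least `k` edges. -/
def EdgeConnected (k : ℕ) : Prop :=
  ∀ S : Finset V, S.Nonempty → S ≠ univ → k ≤ #(G.cut S)

lemma nonempty_and_ne_univ_of_cut_nonempty {S : Finset V} (h : (G.cut S).Nonempty) :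
    S.Nonempty ∧ S ≠ univ := by
  constructor
  · rw [nonempty_iff_ne_empty]
    rintro rfl
    simp [cut_empty] at h
  · rintro rfl
    simp [cut_univ] at h

lemma EdgeConnected.mono {k l : ℕ} (h : G.EdgeConnected l) (hkl : k ≤ l) : G.EdgeConnected k :=
  fun S hS hS' => hkl.trans (h S hS hS')

lemma EdgeConnected.le_card_cut {k : ℕ} (h : G.EdgeConnected k) {S : Finset V}
    (hS : (G.cut S).Nonempty) : k ≤ #(G.cut S) :=
  h S (nonempty_and_ne_univ_of_cut_nonempty hS).1 (nonempty_and_ne_univ_of_cut_nonempty hS).2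

lemma EdgeConnected.le_degree {k : ℕ} (h : G.EdgeConnected k) [Nontrivial V] (v : V) :
    k ≤ G.degree v :=
  h {v} (singleton_nonempty v) (singleton_ne_univ v)

omit [Fintype V] in
lemma cut_map {π : V → W} {S : Finset W} {T : Finset V} (h : ∀ v, v ∈ T ↔ π v ∈ S) :
    (G.map π).cut S = G.cut T := by
  ext e; simp [mem_cut, map, h]

lemma EdgeConnected.map [Fintype W] {k : ℕ} (h : G.EdgeConnected k) {π : V → W}
    (hπ : π.Surjective) : (G.map π).EdgeConnected k := by
  intro S ⟨w, hw⟩ hS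
  obtain ⟨w', hw'⟩ : ∃ w', w' ∉ S := by simpa [eq_univ_iff_forall] using hS
  obtain ⟨v, rfl⟩ := hπ w
  obtain ⟨v', rfl⟩ := hπ w'
  rw [cut_map (T := {v | π v ∈ S}) (by simp)]
  refine h _ ⟨v, by simpa using hw⟩ fun huniv => hw' ?_
  simpa using eq_univ_iff_forall.1 huniv v'

/-! ### The cycle space -/

section CycleSpace

omit [Fintype V]

variable (G) in
/-- Flows with values in `M`, which is meant to have characteristic two, so that orientations are
irrelevant. -/
def IsFlow [AddCommMonoid M] (f : E → M) : Prop := ∀ v, ∑ e ∈ G.cut {v}, f e = 0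

lemma IsFlow.sum_cut [AddCommGroup M] [Module (ZMod 2) M] {f : E → M} (hf : G.IsFlow f)
    (S : Finset V) : ∑ e ∈ G.cut S, f e = 0 := by
  rw [Multigraph.sum_cut]
  exact sum_eq_zero fun v _ => hf v

variable (G) in
/-- The binary flows supported in `Z`. -/
def cycleSpace (Z : Finset E) : Submodule (ZMod 2) (E → ZMod 2) where
  carrier := {f | G.IsFlow f ∧ ∀ e ∉ Z, f e = 0}
  add_mem' := fun {f g} hf hg =>
    ⟨fun v => by simp [sum_add_distrib, hf.1 v, hg.1 v], fun e he => by simp [hf.2 e he, hg.2 e he]⟩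
  zero_mem' := ⟨fun v => by simp, fun e _ => rfl⟩
  smul_mem' := fun c f hf =>
    ⟨fun v => by simp [← mul_sum, hf.1 v], fun e he => by simp [hf.2 e he]⟩

variable (G) in
/-- The dimension of the space of binary flows. -/
noncomputable def cyclomaticNumber : ℕ := finrank (ZMod 2) (G.cycleSpace G.links)

variable (G) in
/-- The binary incidence matrix of the edges in `Z`. -/
noncomputable def incMatrix (Z : Finset E) : Matrix Z V (ZMod 2) :=
  fun e => Pi.single (G.fst e) 1 + Pi.single (G.snd e) 1

/-- Extension by zero identifies the left kernel of the incidence matrix with the cycle space. -/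
lemma finrank_ker_transpose_incMatrix (Z : Finset E) :
    finrank (ZMod 2) (LinearMap.ker (G.incMatrix Z)ᵀ.mulVecLin) =
      finrank (ZMod 2) (G.cycleSpace Z) := by
  have hext : ∀ f : E → ZMod 2, (∀ e ∉ Z, f e = 0) → ∀ v,
      (G.incMatrix Z)ᵀ.mulVec (fun e => f e) v = ∑ e ∈ G.cut {v}, f e := by
    intro f hf v
    rw [sum_cut_eq_sum_smul, ← sum_subset (subset_univ Z) fun e _ he => by simp [hf e he],
      ← sum_coe_sort]
    simp [Matrix.mulVec, dotProduct, incMatrix, Pi.single_apply, eq_comm]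
  refine LinearEquiv.finrank_eq
    { toFun := fun g => ⟨fun e => if h : e ∈ Z then g.1 ⟨e, h⟩ else 0, ?_, fun e he => dif_neg he⟩
      invFun := fun f => ⟨fun e => f.1 e, funext fun v => (hext _ f.2.2 v).trans (f.2.1 v)⟩
      map_add' := fun f g => by ext e; by_cases he : e ∈ Z <;> simp [he]
      map_smul' := fun c f => by ext e; by_cases he : e ∈ Z <;> simp [he]
      left_inv := fun g => by ext e; simp
      right_inv := fun f => by
        ext e
        by_cases he : e ∈ Z
        · simp [he]
        · simp [he, f.2.2 e he] }
  intro v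
  rw [← hext _ fun e he => dif_neg he]
  simp only [coe_mem, dite_true]
  exact congrFun (LinearMap.mem_ker.1 g.2) v

end CycleSpace

variable (G) in
/-- The coboundary map, restricted to the edges in `Y`. -/
noncomputable def coboundary (Y : Finset E) : (V → ZMod 2) →ₗ[ZMod 2] (Y → ZMod 2) :=
  (G.incMatrix Y).mulVecLin

variable (G) in
/-- The binary vertex labellings that are constant along the edges in `Z`. Their dimension is the
number of connected components of the spanning subgraph with edge set `Z`. -/
noncomputable def potentials (Z : Finset E) : Submodule (ZMod 2) (V → ZMod 2) :=
  LinearMap.ker (G.coboundary Z)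

omit [Fintype E] in
lemma coboundary_apply {Y : Finset E} (g : V → ZMod 2) (e : Y) :
    G.coboundary Y g e = g (G.fst e) + g (G.snd e) := by
  change (Pi.single _ 1 + Pi.single _ 1) ⬝ᵥ g = _
  simp [add_dotProduct]

lemma coboundary_apply_ne_zero_iff {Y : Finset E} {g : V → ZMod 2} {e : Y} :
    G.coboundary Y g e ≠ 0 ↔ (e : E) ∈ G.cut {v | g v ≠ 0} := by
  rw [coboundary_apply, mem_cut, mem_filter_univ, mem_filter_univ]
  generalize g (G.fst e) = x, g (G.snd e) = y
  revert x y
  decide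

omit [Fintype E] in
lemma mem_potentials {Z : Finset E} {g : V → ZMod 2} :
    g ∈ G.potentials Z ↔ ∀ e ∈ Z, g (G.fst e) = g (G.snd e) := by
  simp [potentials, LinearMap.mem_ker, funext_iff, coboundary_apply, CharTwo.add_eq_zero]

lemma mem_potentials_links_sdiff {Y : Finset E} {g : V → ZMod 2} :
    g ∈ G.potentials (G.links \ Y) ↔ G.cut {v | g v ≠ 0} ⊆ Y := by
  rw [potentials, LinearMap.mem_ker, funext_iff]
  constructor
  · intro h e he
    by_contra heY
    exact coboundary_apply_ne_zero_iff.2 he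
      (h ⟨e, mem_sdiff.2 ⟨cut_subset_links _ he, heY⟩⟩)
  · rintro h ⟨e, he⟩
    by_contra hne
    exact (mem_sdiff.1 he).2 (h (coboundary_apply_ne_zero_iff.1 hne))

lemma finrank_cycleSpace_add_card (Z : Finset E) :
    finrank (ZMod 2) (G.cycleSpace Z) + Fintype.card V =
      #Z + finrank (ZMod 2) (G.potentials Z) := by
  have hker := LinearMap.finrank_range_add_finrank_ker (G.coboundary Z)
  have hker' := LinearMap.finrank_range_add_finrank_ker (G.incMatrix Z)ᵀ.mulVecLin
  have hrank : finrank (ZMod 2) (LinearMap.range (G.incMatrix Z)ᵀ.mulVecLin) =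
      finrank (ZMod 2) (LinearMap.range (G.coboundary Z)) := (G.incMatrix Z).rank_transpose
  rw [finrank_fintype_fun_eq_card] at hker hker'
  rw [finrank_ker_transpose_incMatrix, Fintype.card_coe] at hker'
  rw [potentials]
  omega

lemma EdgeConnected.finrank_potentials_links [Nonempty V] (h : G.EdgeConnected 1) :
    finrank (ZMod 2) (G.potentials G.links) = 1 := by
  refine (finrank_eq_one_iff_of_nonzero' ⟨1, mem_potentials.2 fun _ _ => rfl⟩ ?_).2 ?_
  · simp [Subtype.ext_iff]
  rintro ⟨g, hg⟩
  have hcut : G.cut {v | g v ≠ 0} = ∅ := by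
    rw [← sdiff_empty (s := G.links), mem_potentials_links_sdiff] at hg
    exact subset_empty.1 hg
  have hS : ({v | g v ≠ 0} : Finset V) = ∅ ∨ ({v | g v ≠ 0} : Finset V) = univ := by
    by_contra! hne
    simpa [hcut] using h _ hne.1 hne.2
  rcases hS with hS | hS
  · refine ⟨0, Subtype.ext (funext fun v => ?_)⟩
    exact (not_not.1 (filter_eq_empty_iff.1 hS (mem_univ v))).symm
  · refine ⟨1, Subtype.ext (funext fun v => ?_)⟩
    exact (Fin.eq_one_of_ne_zero (g v) (filter_eq_self.1 hS v (mem_univ v))).symm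

lemma EdgeConnected.cyclomaticNumber_add_card [Nonempty V] (h : G.EdgeConnected 1) :
    G.cyclomaticNumber + Fintype.card V = #G.links + 1 := by
  rw [cyclomaticNumber, finrank_cycleSpace_add_card, h.finrank_potentials_links]

/-! ### The rank function of the cographic matroid -/

variable (G) in
/-- The space of binary cuts contained in `Y`. -/
noncomputable def cutSpace (Y : Finset E) : Submodule (ZMod 2) (Y → ZMod 2) :=
  (G.potentials (G.links \ Y)).map (G.coboundary Y)

variable (G) in
/-- The rank of `Y` in the cographic matroid, whose circuits are the minimal nonempty cuts. -/
noncomputable def cographicRank (Y : Finset E) : ℕ :=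
  finrank (ZMod 2) ((Y → ZMod 2) ⧸ G.cutSpace Y)

lemma exists_cut_of_mem_cutSpace {Y : Finset E} {x : Y → ZMod 2} (hx : x ∈ G.cutSpace Y) :
    ∃ S, G.cut S ⊆ Y ∧ ∀ e : Y, x e ≠ 0 ↔ (e : E) ∈ G.cut S := by
  obtain ⟨g, hg, rfl⟩ := hx
  exact ⟨({v | g v ≠ 0} : Finset V), mem_potentials_links_sdiff.1 hg,
    fun _ => coboundary_apply_ne_zero_iff⟩

lemma cographicRank_add_finrank_cutSpace (Y : Finset E) :
    G.cographicRank Y + finrank (ZMod 2) (G.cutSpace Y) = #Y := by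
  rw [cographicRank, Submodule.finrank_quotient_add_finrank, finrank_fintype_fun_eq_card,
    Fintype.card_coe]

lemma cographicRank_le_card (Y : Finset E) : G.cographicRank Y ≤ #Y :=
  Nat.le.intro (cographicRank_add_finrank_cutSpace Y)

lemma finrank_cutSpace_add_finrank_potentials {Y : Finset E} (hY : Y ⊆ G.links) :
    finrank (ZMod 2) (G.cutSpace Y) + finrank (ZMod 2) (G.potentials G.links) =
      finrank (ZMod 2) (G.potentials (G.links \ Y)) := by
  have hle : G.potentials G.links ≤ G.potentials (G.links \ Y) := fun g hg =>
    mem_potentials.2 fun e he => mem_potentials.1 hg e (mem_sdiff.1 he).1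
  have hker : LinearMap.ker ((G.coboundary Y).domRestrict (G.potentials (G.links \ Y))) =
      (G.potentials G.links).submoduleOf (G.potentials (G.links \ Y)) := by
    ext ⟨g, hg⟩
    rw [mem_potentials] at hg
    simp only [Submodule.submoduleOf, Submodule.mem_comap, Submodule.subtype_apply,
      LinearMap.mem_ker, LinearMap.domRestrict_apply, mem_potentials, funext_iff,
      coboundary_apply, Pi.zero_apply, CharTwo.add_eq_zero]
    refine ⟨fun h e he => ?_, fun h e => h e (hY e.2)⟩
    by_cases heY : e ∈ Y
    · exact h ⟨e, heY⟩
    · exact hg e (mem_sdiff.2 ⟨he, heY⟩)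
  have hrank := LinearMap.finrank_range_add_finrank_ker
    ((G.coboundary Y).domRestrict (G.potentials (G.links \ Y)))
  rwa [LinearMap.range_domRestrict, hker,
    (Submodule.submoduleOfEquivOfLe hle).finrank_eq] at hrank

lemma cographicRank_add_finrank_cycleSpace {Y : Finset E} (hY : Y ⊆ G.links) :
    G.cographicRank Y + finrank (ZMod 2) (G.cycleSpace (G.links \ Y)) = G.cyclomaticNumber := by
  have hlinks := finrank_cycleSpace_add_card (G := G) G.links
  have hsdiff := finrank_cycleSpace_add_card (G := G) (G.links \ Y)
  have hpot := finrank_cutSpace_add_finrank_potentials hY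
  have hrank := cographicRank_add_finrank_cutSpace (G := G) Y
  have hcard := card_sdiff_add_card_eq_card hY
  rw [cyclomaticNumber]
  omega

lemma cographicRank_lt_card_iff {Y : Finset E} :
    G.cographicRank Y < #Y ↔ ∃ S, (G.cut S).Nonempty ∧ G.cut S ⊆ Y := by
  have hrank := cographicRank_add_finrank_cutSpace (G := G) Y
  have hbot : G.cographicRank Y < #Y ↔ G.cutSpace Y ≠ ⊥ := by
    rw [← Submodule.one_le_finrank_iff]
    omega
  rw [hbot, Submodule.ne_bot_iff]
  constructor
  · rintro ⟨x, hx, hx0⟩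
    obtain ⟨S, hSY, hS⟩ := exists_cut_of_mem_cutSpace hx
    obtain ⟨e, he⟩ := Function.ne_iff.1 hx0
    exact ⟨S, ⟨e, (hS e).1 he⟩, hSY⟩
  · rintro ⟨S, ⟨e, he⟩, hSY⟩
    have hg : ({v | (if v ∈ S then (1 : ZMod 2) else 0) ≠ 0} : Finset V) = S := by ext v; simp
    refine ⟨_, Submodule.mem_map_of_mem (mem_potentials_links_sdiff.2 (hg.symm ▸ hSY)),
      Function.ne_iff.2 ⟨⟨e, hSY he⟩, coboundary_apply_ne_zero_iff.2 (hg.symm ▸ he)⟩⟩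

lemma cographicRank_mono {Y Z : Finset E} (hYZ : Y ⊆ Z) (hZ : Z ⊆ G.links) :
    G.cographicRank Y ≤ G.cographicRank Z := by
  have hY := cographicRank_add_finrank_cycleSpace (hYZ.trans hZ)
  have hZ := cographicRank_add_finrank_cycleSpace hZ
  have hle : G.cycleSpace (G.links \ Z) ≤ G.cycleSpace (G.links \ Y) := fun f hf =>
    ⟨hf.1, fun e he => hf.2 e fun he' => he (sdiff_subset_sdiff subset_rfl hYZ he')⟩
  have := Submodule.finrank_mono hle
  omega

lemma EdgeConnected.cographicRank_eq_card {k : ℕ} (h : G.EdgeConnected k) {Y : Finset E}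
    (hY : #Y < k) : G.cographicRank Y = #Y := by
  refine (cographicRank_le_card Y).antisymm (not_lt.1 fun hlt => ?_)
  obtain ⟨S, hS, hSY⟩ := cographicRank_lt_card_iff.1 hlt
  exact hY.not_ge ((h.le_card_cut hS).trans (card_le_card hSY))

lemma EdgeConnected.le_card_support {k : ℕ} (h : G.EdgeConnected k) {Y : Finset E}
    {x : Y → ZMod 2} (hx : x ∈ G.cutSpace Y) (hx0 : x ≠ 0) : k ≤ #{e | x e ≠ 0} := by
  obtain ⟨S, hSY, hS⟩ := exists_cut_of_mem_cutSpace hx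
  obtain ⟨e, he⟩ := Function.ne_iff.1 hx0
  have hsupp : G.cut S = ({e | x e ≠ 0} : Finset Y).map (Function.Embedding.subtype _) := by
    ext e
    simpa [hS] using fun he => hSY he
  calc k ≤ #(G.cut S) := h.le_card_cut ⟨e, (hS e).1 he⟩
    _ = #{e | x e ≠ 0} := by rw [hsupp, card_map]

/-- The sphere-packing bound for the binary code `G.cutSpace Y`, which corrects one error. -/
lemma EdgeConnected.card_add_one_le_two_pow_cographicRank (h : G.EdgeConnected 3) (Y : Finset E) :
    #Y + 1 ≤ 2 ^ G.cographicRank Y := by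
  let word : Option Y → Y → ZMod 2 := fun o e => if e ∈ o then 1 else 0
  have hword : Function.Injective word := fun o o' heq => Option.ext fun e => by
    have := congrFun heq e
    by_cases ho : o = some e <;> by_cases ho' : o' = some e <;> simp_all [word]
  have hinj : Function.Injective fun o => (G.cutSpace Y).mkQ (word o) := by
    intro o o' heq
    by_contra hne
    have hle := h.le_card_support ((Submodule.Quotient.eq _).1 heq) (sub_ne_zero.2 (hword.ne hne))
    have hsub : ({e | (word o - word o') e ≠ 0} : Finset Y) ⊆ o.toFinset ∪ o'.toFinset := by
      intro e
      simp only [mem_filter_univ, mem_union, Pi.sub_apply, Option.mem_toFinset, word]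
      grind
    have hcard := (card_le_card hsub).trans (card_union_le _ _)
    rw [Option.card_toFinset, Option.card_toFinset] at hcard
    have ho : ∀ o : Option Y, o.elim 0 1 ≤ 1 := by rintro (_ | _) <;> simp
    have := ho o
    have := ho o'
    omega
  calc #Y + 1 = Nat.card (Option Y) := by simp
    _ ≤ Nat.card ((Y → ZMod 2) ⧸ G.cutSpace Y) := Nat.card_le_card_of_injective _ hinj
    _ = 2 ^ G.cographicRank Y := by
      rw [Module.natCard_eq_pow_finrank (K := ZMod 2), Nat.card_zmod, cographicRank]

/-! ### The flow polynomial -/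

section FlowPolynomial

variable (G) in
/-- The flow polynomial, as a sum over the sets `Y` of links on which a flow is forced to vanish. -/
noncomputable def flowPolynomial : ℤ[X] :=
  ∑ Y ∈ G.links.powerset, (-1) ^ #Y * X ^ finrank (ZMod 2) (G.cycleSpace (G.links \ Y))

section Eval

omit [Fintype V]

lemma natDegree_flowPolynomial_le : G.flowPolynomial.natDegree ≤ G.cyclomaticNumber := by
  refine natDegree_sum_le_of_forall_le _ _ fun Y _ => ?_
  have hle : G.cycleSpace (G.links \ Y) ≤ G.cycleSpace G.links := fun f hf =>
    ⟨hf.1, fun e he => hf.2 e fun he' => he (mem_sdiff.1 he').1⟩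
  rw [← C_1, ← C_neg, ← C_pow]
  exact (natDegree_C_mul_X_pow_le _ _).trans (Submodule.finrank_mono hle)

variable (G M) in
/-- The `M`-valued flows whose support is the set of all links. -/
noncomputable def nowhereZeroFlows [AddCommMonoid M] [Fintype M] : Finset (E → M) :=
  {f | G.IsFlow f ∧ ∀ e, f e ≠ 0 ↔ e ∈ G.links}

lemma mem_nowhereZeroFlows [AddCommMonoid M] [Fintype M] {f : E → M} :
    f ∈ G.nowhereZeroFlows M ↔ G.IsFlow f ∧ ∀ e, f e ≠ 0 ↔ e ∈ G.links := by
  simp [nowhereZeroFlows]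

variable [AddCommGroup M] [Module (ZMod 2) M] [Fintype M]

lemma card_flows_supported (Z : Finset E) :
    #{f : E → M | G.IsFlow f ∧ ∀ e ∉ Z, f e = 0} =
      Fintype.card M ^ finrank (ZMod 2) (G.cycleSpace Z) := by
  let φ := (finBasis (ZMod 2) M).equivFun
  calc #{f : E → M | G.IsFlow f ∧ ∀ e ∉ Z, f e = 0}
      = Fintype.card (Fin (finrank (ZMod 2) M) → G.cycleSpace Z) := ?_
    _ = Fintype.card M ^ finrank (ZMod 2) (G.cycleSpace Z) := by
      rw [Fintype.card_fun, Module.card_eq_pow_finrank (K := ZMod 2) (V := M),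
        Module.card_eq_pow_finrank (K := ZMod 2) (V := G.cycleSpace Z), Fintype.card_fin,
        pow_right_comm]
  rw [← Finset.card_univ]
  refine card_bij' (fun f hf i => ⟨fun e => φ (f e) i, ?_⟩)
    (fun g _ e => φ.symm fun i => (g i).1 e) (fun _ _ => mem_univ _) (fun g _ => ?_)
    (fun f _ => by simp) (fun g _ => by simp)
  · obtain ⟨hflow, hsupp⟩ := (mem_filter_univ _).1 hf
    refine ⟨fun v => ?_, fun e he => by simp [hsupp e he]⟩
    simpa using congrFun (congrArg φ (hflow v)) i
  · refine (mem_filter_univ _).2 ⟨fun v => φ.injective ?_, fun e he => φ.injective ?_⟩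
    · ext i
      simpa using (g i).2.1 v
    · ext i
      simpa using (g i).2.2 e he

/-- Inclusion-exclusion over the set of links on which a flow vanishes. -/
lemma eval_flowPolynomial :
    G.flowPolynomial.eval (Fintype.card M : ℤ) = #(G.nowhereZeroFlows M) := by
  let vanish : E → Finset (E → M) := fun e => {f | f e = 0}
  let flows : Finset (E → M) := {f | G.IsFlow f ∧ ∀ e ∉ G.links, f e = 0}
  have hnowhereZero :
      G.nowhereZeroFlows M = {f ∈ G.links.inf fun e => (vanish e)ᶜ | f ∈ flows} := by
    ext f
    simp only [mem_nowhereZeroFlows, mem_filter, mem_inf, mem_compl, vanish, flows]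
    grind
  have hsupported : ∀ Y ∈ G.links.powerset, #{f ∈ Y.inf vanish | f ∈ flows} =
      Fintype.card M ^ finrank (ZMod 2) (G.cycleSpace (G.links \ Y)) := by
    intro Y hY
    rw [mem_powerset] at hY
    rw [← card_flows_supported]
    congr 1
    ext f
    simp only [mem_filter, mem_inf, mem_univ, true_and, mem_sdiff, vanish, flows]
    grind
  rw [hnowhereZero, ← sum_boole, inclusion_exclusion_sum_inf_compl, flowPolynomial, eval_finsetSum]
  refine sum_congr rfl fun Y hY => ?_
  rw [sum_boole, hsupported Y hY]
  simp

lemma eval_one_flowPolynomial (h : G.links.Nonempty) : G.flowPolynomial.eval 1 = 0 := by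
  obtain ⟨e, he⟩ := h
  have heval := eval_flowPolynomial (G := G) (M := PUnit.{1})
  rw [Fintype.card_punit, Nat.cast_one] at heval
  rw [heval, Nat.cast_eq_zero, card_eq_zero, eq_empty_iff_forall_notMem]
  intro f hf
  exact ((mem_nowhereZeroFlows.1 hf).2 e).2 he (Subsingleton.elim _ _)

/-- The only nowhere-zero binary function is constant, so it is no flow at a vertex of odd
degree. -/
lemma eval_two_flowPolynomial {v : V} (h : Odd (G.degree v)) : G.flowPolynomial.eval 2 = 0 := by
  have heval := eval_flowPolynomial (G := G) (M := ZMod 2)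
  rw [ZMod.card, Nat.cast_ofNat] at heval
  rw [heval, Nat.cast_eq_zero, card_eq_zero, eq_empty_iff_forall_notMem]
  intro f hf
  obtain ⟨hflow, hsupp⟩ := mem_nowhereZeroFlows.1 hf
  have hone : ∀ e ∈ G.cut {v}, f e = 1 := fun e he =>
    Fin.eq_one_of_ne_zero (f e) ((hsupp e).2 (cut_subset_links _ he))
  have hdegree := hflow v
  rw [sum_congr rfl hone, sum_const, nsmul_one, ZMod.natCast_eq_zero_iff_even] at hdegree
  exact Nat.not_even_iff_odd.2 h hdegree

end Eval

lemma coeff_flowPolynomial {j : ℕ} (hj : j ≤ G.cyclomaticNumber) :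
    G.flowPolynomial.coeff (G.cyclomaticNumber - j) =
      ∑ Y ∈ G.links.powerset with G.cographicRank Y = j, (-1) ^ #Y := by
  rw [flowPolynomial, finsetSum_coeff, sum_filter]
  refine sum_congr rfl fun Y hY => ?_
  have hrank := cographicRank_add_finrank_cycleSpace (mem_powerset.1 hY)
  rw [← C_1, ← C_neg, ← C_pow, coeff_C_mul_X_pow]
  congr 1
  exact propext ⟨fun h => by omega, fun h => by omega⟩

lemma EdgeConnected.coeff_flowPolynomial_cyclomaticNumber (h : G.EdgeConnected 2) :
    G.flowPolynomial.coeff G.cyclomaticNumber = 1 := by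
  have hrank : {Y ∈ G.links.powerset | G.cographicRank Y = 0} = {∅} := by
    ext Y
    rw [mem_filter, mem_powerset, mem_singleton]
    constructor
    · rintro ⟨hY, hrank⟩
      refine eq_empty_of_forall_notMem fun e he => ?_
      have hmono := cographicRank_mono (singleton_subset_iff.2 he) hY
      rw [h.cographicRank_eq_card (by simp), card_singleton] at hmono
      omega
    · rintro rfl
      exact ⟨empty_subset _, Nat.le_zero.1 (cographicRank_le_card ∅)⟩
  have hcoeff := coeff_flowPolynomial (G := G) (Nat.zero_le _)
  rwa [hrank, sum_singleton, card_empty, pow_zero, Nat.sub_zero] at hcoeff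

lemma EdgeConnected.natDegree_flowPolynomial (h : G.EdgeConnected 2) :
    G.flowPolynomial.natDegree = G.cyclomaticNumber :=
  natDegree_eq_of_le_of_coeff_ne_zero natDegree_flowPolynomial_le
    (h.coeff_flowPolynomial_cyclomaticNumber ▸ one_ne_zero)

lemma EdgeConnected.monic_flowPolynomial (h : G.EdgeConnected 2) : G.flowPolynomial.Monic := by
  rw [Monic, leadingCoeff, h.natDegree_flowPolynomial, h.coeff_flowPolynomial_cyclomaticNumber]

lemma EdgeConnected.cographicRank_eq_one_iff (h : G.EdgeConnected 3) {Y : Finset E} :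
    G.cographicRank Y = 1 ↔ #Y = 1 := by
  refine ⟨fun hrank => ?_, fun hcard => by rw [h.cographicRank_eq_card (by omega), hcard]⟩
  have hle := h.card_add_one_le_two_pow_cographicRank Y
  have := cographicRank_le_card (G := G) Y
  rw [hrank] at hle
  omega

lemma EdgeConnected.cographicRank_eq_two_iff (h : G.EdgeConnected 3) {Y : Finset E} :
    G.cographicRank Y = 2 ↔ #Y = 2 ∨ #Y = 3 ∧ ∃ S, G.cut S = Y := by
  have hpow := h.card_add_one_le_two_pow_cographicRank Y
  have hle := cographicRank_le_card (G := G) Y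
  constructor
  · intro hrank
    rw [hrank] at hpow
    rcases (by omega : #Y = 2 ∨ #Y = 3) with hcard | hcard
    · exact .inl hcard
    · obtain ⟨S, hS, hSY⟩ := cographicRank_lt_card_iff.1 (by omega : G.cographicRank Y < #Y)
      exact .inr ⟨hcard, S, eq_of_subset_of_card_le hSY (hcard ▸ h.le_card_cut hS)⟩
  · rintro (hcard | ⟨hcard, S, rfl⟩)
    · rw [h.cographicRank_eq_card (by omega), hcard]
    · have hlt : G.cographicRank (G.cut S) < #(G.cut S) :=
        cographicRank_lt_card_iff.2 ⟨S, card_pos.1 (by omega), subset_rfl⟩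
      have : ¬ G.cographicRank (G.cut S) ≤ 1 := fun hone => by
        have := Nat.pow_le_pow_right two_pos hone
        omega
      omega

lemma EdgeConnected.coeff_flowPolynomial_sub_one (h : G.EdgeConnected 3)
    (hd : 1 ≤ G.cyclomaticNumber) :
    G.flowPolynomial.coeff (G.cyclomaticNumber - 1) = -#G.links := by
  rw [coeff_flowPolynomial hd]
  simp only [h.cographicRank_eq_one_iff, ← powersetCard_eq_filter]
  rw [sum_congr rfl fun Y hY => by rw [(mem_powersetCard.1 hY).2]]
  simp

lemma EdgeConnected.coeff_flowPolynomial_sub_two (h : G.EdgeConnected 3)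
    (hd : 2 ≤ G.cyclomaticNumber) :
    G.flowPolynomial.coeff (G.cyclomaticNumber - 2) =
      (#G.links).choose 2 - #{Y ∈ univ.image G.cut | #Y = 3} := by
  have hsplit : {Y ∈ G.links.powerset | G.cographicRank Y = 2} = G.links.powersetCard 2 ∪
      {Y ∈ univ.image G.cut | #Y = 3} := by
    ext Y
    simp only [h.cographicRank_eq_two_iff, mem_filter, mem_powerset, mem_union, mem_powersetCard,
      mem_image_univ_iff_mem_range, Set.mem_range]
    have hsub : (∃ S, G.cut S = Y) → Y ⊆ G.links := fun ⟨S, hS⟩ => hS ▸ cut_subset_links S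
    tauto
  have hdisj : Disjoint (G.links.powersetCard 2)
      {Y ∈ univ.image G.cut | #Y = 3} := by
    rw [disjoint_left]
    intro Y htwo hthree
    have := (mem_powersetCard.1 htwo).2
    have := (mem_filter.1 hthree).2
    omega
  rw [coeff_flowPolynomial hd, hsplit, sum_union hdisj,
    sum_congr rfl fun Y hY => by rw [(mem_powersetCard.1 hY).2],
    sum_congr (s₁ := filter _ _) rfl fun Y hY => by rw [(mem_filter.1 hY).2]]
  simp [sub_eq_add_neg, pow_succ]

end FlowPolynomial

/-! ### Gluing flows along a small cut -/

section Gluing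

lemma card_fiberProduct_mul_card {X Y H : Type*} [DecidableEq H] {s : Finset X} {t : Finset Y}
    {u : Finset H} {ρ : X → H} {σ : Y → H} (hρ : Set.MapsTo ρ s u) (hσ : Set.MapsTo σ t u)
    (hfib : ∀ h ∈ u, ∀ h' ∈ u, #{x ∈ s | ρ x = h} ≤ #{x ∈ s | ρ x = h'}) :
    #{p ∈ s ×ˢ t | ρ p.1 = σ p.2} * #u = #s * #t := by
  obtain rfl | ⟨h₀, hh₀⟩ := u.eq_empty_or_nonempty
  · have hs : s = ∅ := eq_empty_of_forall_notMem fun x hx => by simpa using hρ hx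
    simp [hs]
  have hconst : ∀ h ∈ u, #{x ∈ s | ρ x = h} = #{x ∈ s | ρ x = h₀} := fun h hh =>
    (hfib h hh h₀ hh₀).antisymm (hfib h₀ hh₀ h hh)
  have hprod : #{p ∈ s ×ˢ t | ρ p.1 = σ p.2} = ∑ y ∈ t, #{x ∈ s | ρ x = σ y} := by
    rw [card_filter, sum_product_right]
    simp_rw [card_filter]
  rw [hprod, sum_congr rfl fun y hy => hconst _ (hσ hy), sum_const,
    card_eq_sum_card_fiberwise hρ, sum_congr rfl hconst, sum_const]
  simp only [smul_eq_mul]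
  ring

lemma exists_linearEquiv_of_linearIndependent {K ι : Type*} [Field K] [AddCommGroup M]
    [Module K M] [Finite ι] {x y : ι → M} (hx : LinearIndependent K x)
    (hy : LinearIndependent K y) : ∃ g : M ≃ₗ[K] M, ∀ i, g (x i) = y i := by
  have : FiniteDimensional K (Submodule.span K (Set.range x)) :=
    FiniteDimensional.span_of_finite K (Set.finite_range x)
  obtain ⟨g, hg⟩ := Submodule.exists_linearEquiv_restrict_eq
    (hx.linearCombinationEquiv.symm ≪≫ₗ hy.linearCombinationEquiv)
  refine ⟨g, fun i => ?_⟩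
  have hi : hx.linearCombinationEquiv (Finsupp.single i 1) = x i := by simp
  rw [← hi, ← hg]
  simp

lemma linearIndepOn_of_sum_ne_zero {ι : Type*} [AddCommGroup M] [Module (ZMod 2) M] {s : Finset ι}
    {x : ι → M} (h : ∀ t ⊆ s, t.Nonempty → ∑ i ∈ t, x i ≠ 0) : LinearIndepOn (ZMod 2) x s := by
  rw [linearIndepOn_finset_iff]
  intro c hc
  by_contra! hne
  obtain ⟨i, hi, hci⟩ := hne
  refine h {i ∈ s | c i ≠ 0} (filter_subset _ _) ⟨i, mem_filter.2 ⟨hi, hci⟩⟩ ?_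
  rw [sum_filter]
  refine Eq.trans (sum_congr rfl fun j _ => ?_) hc
  split_ifs with hj
  · have hone : c j = 1 := Fin.eq_one_of_ne_zero (c j) hj
    rw [hone, one_smul]
  · rw [not_not.1 hj, zero_smul]

lemma linearIndepOn_erase_of_sum_eq_zero {ι : Type*} [AddCommGroup M] [Module (ZMod 2) M]
    {s : Finset ι} {x : ι → M} (hs : #s ≤ 3) (hx : ∀ i ∈ s, x i ≠ 0) (hsum : ∑ i ∈ s, x i = 0)
    {a : ι} (ha : a ∈ s) : LinearIndepOn (ZMod 2) x (s.erase a : Finset ι) := by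
  refine linearIndepOn_of_sum_ne_zero fun t ht htne => ?_
  obtain rfl | hlt := eq_or_ssubset_of_subset ht
  · intro h
    rw [← add_sum_erase s x ha, h, add_zero] at hsum
    exact hx a ha hsum
  · have hcard := card_lt_card hlt
    rw [card_erase_of_mem ha] at hcard
    obtain ⟨i, rfl⟩ := card_eq_one.1 (by have := htne.card_pos; omega : #t = 1)
    rw [sum_singleton]
    exact hx i (mem_of_mem_erase (ht (mem_singleton_self i)))

lemma exists_linearEquiv_of_sum_eq_zero {ι : Type*} [AddCommGroup M] [Module (ZMod 2) M]
    {s : Finset ι} {x y : ι → M} (hs : #s ≤ 3) (hx : ∀ i ∈ s, x i ≠ 0)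
    (hxsum : ∑ i ∈ s, x i = 0) (hy : ∀ i ∈ s, y i ≠ 0) (hysum : ∑ i ∈ s, y i = 0) :
    ∃ g : M ≃ₗ[ZMod 2] M, ∀ i ∈ s, g (x i) = y i := by
  obtain rfl | ⟨a, ha⟩ := s.eq_empty_or_nonempty
  · exact ⟨.refl _ _, by simp⟩
  obtain ⟨g, hg⟩ := exists_linearEquiv_of_linearIndependent
    (linearIndepOn_erase_of_sum_eq_zero hs hx hxsum ha)
    (linearIndepOn_erase_of_sum_eq_zero hs hy hysum ha)
  have hoff : ∀ i ∈ s.erase a, g (x i) = y i := fun i hi => hg ⟨i, hi⟩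
  refine ⟨g, fun i hi => ?_⟩
  by_cases hia : i = a
  · subst hia
    rw [← add_sum_erase s x hi] at hxsum
    rw [← add_sum_erase s y hi] at hysum
    rw [eq_neg_of_add_eq_zero_left hxsum, eq_neg_of_add_eq_zero_left hysum, map_neg, map_sum,
      sum_congr rfl hoff]
  · exact hoff i (mem_erase.2 ⟨hia, hi⟩)

/-- Keeps the vertices of `A` and sends all other vertices to `none`. -/
noncomputable def contractMap (A : Finset V) (v : V) : Option A :=
  if h : v ∈ A then some ⟨v, h⟩ else none

variable (G) in
/-- The multigraph obtained by contracting the complement of `A` to the single vertex `none`. -/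
noncomputable def contract (A : Finset V) : Multigraph (Option A) E := G.map (contractMap A)

variable (G) in
/-- The multigraph with two vertices obtained by contracting `A` and its complement. -/
def dipole (A : Finset V) : Multigraph Prop E := G.map (· ∈ A)

omit [Fintype V] in
lemma contractMap_eq_some_iff {A : Finset V} {v : V} {w : A} :
    contractMap A v = some w ↔ v = w := by
  rw [contractMap]
  split_ifs with h
  · simp [Subtype.ext_iff]
  · exact iff_of_false (by simp) fun hv => h (hv ▸ w.2)

omit [Fintype V] in
lemma contractMap_eq_none_iff {A : Finset V} {v : V} : contractMap A v = none ↔ v ∉ A := by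
  simp [contractMap]

lemma contractMap_surjective {A : Finset V} (hA : A ≠ univ) : (contractMap A).Surjective := by
  rintro (_ | w)
  · obtain ⟨v, hv⟩ : ∃ v, v ∉ A := by simpa [eq_univ_iff_forall] using hA
    exact ⟨v, contractMap_eq_none_iff.2 hv⟩
  · exact ⟨w, contractMap_eq_some_iff.2 rfl⟩

omit [Fintype V] in
variable (G) in
lemma cut_contract_some {A : Finset V} (v : A) : (G.contract A).cut {some v} = G.cut {v.1} := by
  ext e
  simp [mem_cut, contract, map, contractMap_eq_some_iff]

omit [Fintype V] in
variable (G) in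
lemma cut_contract_none (A : Finset V) : (G.contract A).cut {none} = G.cut A := by
  ext e
  simp [mem_cut, contract, map, contractMap_eq_none_iff, not_iff_not]

omit [Fintype V] in
variable (G) in
lemma links_map_subset (π : V → W) : (G.map π).links ⊆ G.links := fun _ he =>
  mem_links.2 fun h => mem_links.1 he (congrArg π h)

omit [Fintype V] in
variable (G) in
lemma links_dipole (A : Finset V) : (G.dipole A).links = G.cut A := by
  ext e
  simp [dipole, map, mem_links, mem_cut]

omit [Fintype V] in
lemma mem_links_contract {A : Finset V} {e : E} :
    e ∈ (G.contract A).links ↔ e ∈ G.links ∧ (G.fst e ∈ A ∨ G.snd e ∈ A) := by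
  simp only [contract, map, mem_links, Function.comp_apply, contractMap]
  split_ifs <;> simp_all
  all_goals grind

lemma links_contract_union (A : Finset V) :
    (G.contract A).links ∪ (G.contract Aᶜ).links = G.links := by
  ext e
  simp only [mem_union, mem_links_contract, mem_compl]
  tauto

lemma links_contract_inter (A : Finset V) :
    (G.contract A).links ∩ (G.contract Aᶜ).links = G.cut A := by
  ext e
  have := @cut_subset_links _ _ _ G A e
  simp only [mem_inter, mem_links_contract, mem_compl, mem_cut] at *
  tauto

omit [Fintype V] in
lemma cut_singleton_subset_links_contract {A : Finset V} {v : V} (hv : v ∈ A) :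
    G.cut {v} ⊆ (G.contract A).links := fun e he => by
  refine mem_links_contract.2 ⟨cut_subset_links _ he, ?_⟩
  simp only [mem_cut, mem_singleton] at he
  grind

omit [Fintype V] in
lemma IsFlow.map [Finite V] [AddCommGroup M] [Module (ZMod 2) M] {f : E → M} (hf : G.IsFlow f)
    (π : V → W) : (G.map π).IsFlow f := fun w => by
  cases nonempty_fintype V
  rw [cut_map (T := {v | π v ∈ ({w} : Finset W)}) (by simp)]
  exact hf.sum_cut _

section NowhereZero

variable [AddCommGroup M] [Module (ZMod 2) M] [Fintype M]

omit [Fintype V] in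
lemma restrict_mem_nowhereZeroFlows [Finite V] {f : E → M} (hf : f ∈ G.nowhereZeroFlows M)
    (π : V → W) : Set.indicator (G.map π).links f ∈ (G.map π).nowhereZeroFlows M := by
  rw [mem_nowhereZeroFlows] at hf ⊢
  refine ⟨fun w => ?_, fun e => ?_⟩
  · rw [sum_congr rfl fun e he =>
      Set.indicator_of_mem (cut_subset_links _ he : e ∈ (G.map π).links) f]
    exact hf.1.map π w
  · by_cases he : e ∈ (G.map π).links
    · simpa [he] using (hf.2 e).2 (links_map_subset G π he)
    · simp [he]

omit [Module (ZMod 2) M] in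
lemma glue_mem_nowhereZeroFlows {A : Finset V} {f g : E → M}
    (hf : f ∈ (G.contract A).nowhereZeroFlows M) (hg : g ∈ (G.contract Aᶜ).nowhereZeroFlows M)
    (hfg : ∀ e ∈ G.cut A, f e = g e) :
    (G.contract A).links.piecewise f g ∈ G.nowhereZeroFlows M := by
  rw [mem_nowhereZeroFlows] at hf hg ⊢
  have hleft : ∀ e ∈ (G.contract A).links, (G.contract A).links.piecewise f g e = f e :=
    fun e he => piecewise_eq_of_mem _ _ _ he
  have hright : ∀ e ∈ (G.contract Aᶜ).links, (G.contract A).links.piecewise f g e = g e := by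
    intro e he
    by_cases he' : e ∈ (G.contract A).links
    · rw [hleft e he']
      exact hfg e (links_contract_inter (G := G) A ▸ mem_inter.2 ⟨he', he⟩)
    · exact piecewise_eq_of_notMem _ _ _ he'
  refine ⟨fun v => ?_, fun e => ?_⟩
  · by_cases hv : v ∈ A
    · rw [sum_congr rfl fun e he => hleft e (cut_singleton_subset_links_contract hv he),
        ← cut_contract_some G ⟨v, hv⟩]
      exact hf.1 _
    · rw [← mem_compl] at hv
      rw [sum_congr rfl fun e he => hright e (cut_singleton_subset_links_contract hv he),
        ← cut_contract_some G ⟨v, hv⟩]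
      exact hg.1 _
  · rw [← links_contract_union A, mem_union]
    by_cases he : e ∈ (G.contract A).links
    · simp [he, hf.2 e]
    · simp [he, hg.2 e]

lemma card_nowhereZeroFlows_eq_card_agreeing (A : Finset V) :
    #(G.nowhereZeroFlows M) =
      #{p ∈ (G.contract A).nowhereZeroFlows M ×ˢ (G.contract Aᶜ).nowhereZeroFlows M |
        Set.indicator (G.cut A) p.1 = Set.indicator (G.cut A) p.2} := by
  have hunion := fun e => Finset.ext_iff.1 (links_contract_union (G := G) A) e
  have hinter := fun e => Finset.ext_iff.1 (links_contract_inter (G := G) A) e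
  simp only [mem_union, mem_inter] at hunion hinter
  refine card_bij'
    (fun f _ => (Set.indicator (G.contract A).links f, Set.indicator (G.contract Aᶜ).links f))
    (fun p _ => (G.contract A).links.piecewise p.1 p.2) (fun f hf => ?_) (fun p hp => ?_)
    (fun f hf => ?_) (fun p hp => ?_)
  · refine mem_filter.2 ⟨mem_product.2 ⟨restrict_mem_nowhereZeroFlows hf _,
      restrict_mem_nowhereZeroFlows hf _⟩, funext fun e => ?_⟩
    have := hinter e
    simp only [Set.indicator, mem_coe]
    grind
  · simp only [mem_filter, mem_product] at hp
    refine glue_mem_nowhereZeroFlows hp.1.1 hp.1.2 fun e he => ?_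
    simpa [he] using congrFun hp.2 e
  · ext e
    have hsupp := (mem_nowhereZeroFlows.1 hf).2 e
    have := hunion e
    simp only [piecewise, Set.indicator, mem_coe]
    grind
  · simp only [mem_filter, mem_product, mem_nowhereZeroFlows] at hp
    obtain ⟨⟨⟨-, hsupp₁⟩, -, hsupp₂⟩, hagree⟩ := hp
    have hagree' := congrFun hagree
    refine Prod.ext (funext fun e => ?_) (funext fun e => ?_) <;>
      simp only [piecewise, Set.indicator, mem_coe] at hagree' ⊢ <;> grind

omit [Fintype V] in
lemma map_mem_nowhereZeroFlows {f : E → M} (hf : f ∈ G.nowhereZeroFlows M) (g : M ≃ₗ[ZMod 2] M) :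
    (fun e => g (f e)) ∈ G.nowhereZeroFlows M := by
  rw [mem_nowhereZeroFlows] at hf ⊢
  refine ⟨fun v => ?_, fun e => ?_⟩
  · rw [← map_sum, hf.1 v, map_zero]
  · rw [← hf.2 e, ne_eq, ne_eq, g.map_eq_zero_iff]

omit [Fintype V] in
/-- At most three nonzero vectors with zero sum form a single orbit of the general linear group. -/
lemma card_fiber_restrict_le {A : Finset V} (hA : #(G.cut A) ≤ 3) {h h' : E → M}
    (hh : h ∈ (G.dipole A).nowhereZeroFlows M) (hh' : h' ∈ (G.dipole A).nowhereZeroFlows M)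
    (s : Multigraph W E) :
    #{f ∈ s.nowhereZeroFlows M | Set.indicator (G.cut A) f = h} ≤
      #{f ∈ s.nowhereZeroFlows M | Set.indicator (G.cut A) f = h'} := by
  rw [mem_nowhereZeroFlows, links_dipole] at hh hh'
  have hsum : ∀ {k : E → M}, (G.dipole A).IsFlow k → ∑ e ∈ G.cut A, k e = 0 := fun {k} hk => by
    simpa [dipole, map, cut] using hk True
  obtain ⟨g, hg⟩ := exists_linearEquiv_of_sum_eq_zero hA (fun e he => (hh.2 e).2 he) (hsum hh.1)
    (fun e he => (hh'.2 e).2 he) (hsum hh'.1)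
  refine card_le_card_of_injOn (fun f e => g (f e)) (fun f hf => ?_) fun f _ f' _ hff' =>
    funext fun e => g.injective (congrFun hff' e)
  simp only [coe_filter, Set.mem_ofPred_eq] at hf ⊢
  refine ⟨map_mem_nowhereZeroFlows hf.1 g, funext fun e => ?_⟩
  by_cases he : e ∈ G.cut A
  · have := congrFun hf.2 e
    simp only [mem_coe, he, Set.indicator_of_mem] at this ⊢
    rw [this, hg e he]
  · rw [Set.indicator_of_notMem (mem_coe.not.2 he)]
    exact (not_not.1 ((hh'.2 e).not.2 he)).symm

lemma card_nowhereZeroFlows_mul_dipole {A : Finset V} (hA : #(G.cut A) ≤ 3) :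
    #(G.nowhereZeroFlows M) * #((G.dipole A).nowhereZeroFlows M) =
      #((G.contract A).nowhereZeroFlows M) * #((G.contract Aᶜ).nowhereZeroFlows M) := by
  have hdipole : (G.contract A).map (· ≠ none) = G.dipole A := by
    simp [contract, dipole, map, Function.comp_def, contractMap_eq_none_iff]
  have hdipole' : (G.contract Aᶜ).map (· = none) = G.dipole A := by
    simp [contract, dipole, map, Function.comp_def, contractMap_eq_none_iff]
  rw [card_nowhereZeroFlows_eq_card_agreeing A]
  refine card_fiberProduct_mul_card (fun f hf => ?_) (fun f hf => ?_)
    fun h hh h' hh' => card_fiber_restrict_le hA hh hh' _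
  · have := restrict_mem_nowhereZeroFlows hf (· ≠ none)
    rwa [hdipole, links_dipole] at this
  · have := restrict_mem_nowhereZeroFlows hf (· = none)
    rwa [hdipole', links_dipole] at this

end NowhereZero

lemma eq_of_eval_two_pow_eq {p q : ℤ[X]} (h : ∀ r : ℕ, p.eval (2 ^ r) = q.eval (2 ^ r)) :
    p = q := by
  refine eq_of_infinite_eval_eq p q (Set.Infinite.mono (s := Set.range fun r : ℕ => (2 : ℤ) ^ r)
    (Set.range_subset_iff.2 h) (Set.infinite_range_of_injective ?_))
  exact pow_right_injective₀ (by norm_num) (by norm_num)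

theorem flowPolynomial_mul_flowPolynomial_dipole {A : Finset V} (hA : #(G.cut A) ≤ 3) :
    G.flowPolynomial * (G.dipole A).flowPolynomial =
      (G.contract A).flowPolynomial * (G.contract Aᶜ).flowPolynomial := by
  refine eq_of_eval_two_pow_eq fun r => ?_
  have hcard : (2 : ℤ) ^ r = (Fintype.card (Fin r → ZMod 2) : ℤ) := by simp
  rw [eval_mul, eval_mul, hcard]
  simp only [eval_flowPolynomial]
  exact_mod_cast card_nowhereZeroFlows_mul_dipole hA

end Gluing

/-! ### Flow polynomials of multigraphs with small cyclomatic number -/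

omit [Fintype V] in
lemma X_sub_one_mul_X_sub_two_dvd_flowPolynomial {v : V} (h : Odd (G.degree v)) :
    (X - C 1) * (X - C 2) ∣ G.flowPolynomial := by
  have hlinks : G.links.Nonempty := (card_pos.1 h.pos).mono (cut_subset_links _)
  exact (isCoprime_X_sub_C_of_isUnit_sub (by norm_num)).mul_dvd
    (dvd_iff_isRoot.2 (eval_one_flowPolynomial hlinks))
    (dvd_iff_isRoot.2 (eval_two_flowPolynomial h))

lemma EdgeConnected.card_le_card_links [Nontrivial V] (h : G.EdgeConnected 2) :
    Fintype.card V ≤ #G.links := by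
  have hsum := card_nsmul_le_sum univ G.degree 2 fun v _ => h.le_degree v
  rw [sum_degree, card_univ, smul_eq_mul] at hsum
  omega

lemma EdgeConnected.exists_degree_eq_three [Nontrivial V] (h : G.EdgeConnected 2)
    (hdeg : ∀ v, G.degree v ≤ 3) (hcyc : G.cyclomaticNumber ≠ 1) : ∃ v, G.degree v = 3 := by
  by_contra! hne
  have htwo : ∀ v ∈ univ, G.degree v = 2 := fun v _ => by
    have := h.le_degree v
    have := hdeg v
    have := hne v
    omega
  have hsum := G.sum_degree
  rw [sum_congr rfl htwo, sum_const, card_univ, smul_eq_mul] at hsum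
  have := (h.mono one_le_two).cyclomaticNumber_add_card
  omega

lemma EdgeConnected.flowPolynomial_of_cyclomaticNumber_le_two [Nontrivial V]
    (h : G.EdgeConnected 2) (hdeg : ∀ v, G.degree v ≤ 3) (hcyc : G.cyclomaticNumber ≤ 2) :
    G.flowPolynomial = (X - C 1) * (X - C 2) ^ (G.cyclomaticNumber - 1) := by
  have hm := h.card_le_card_links
  have hd := (h.mono one_le_two).cyclomaticNumber_add_card
  have hmonic := h.monic_flowPolynomial
  have hnatDegree := h.natDegree_flowPolynomial
  rcases (by omega : G.cyclomaticNumber = 1 ∨ G.cyclomaticNumber = 2) with hd | hd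
  · have hlinks : G.links.Nonempty := card_pos.1 (Fintype.card_pos.trans_le hm)
    rw [hd, pow_zero, mul_one]
    refine (eq_of_monic_of_dvd_of_natDegree_le (monic_X_sub_C 1) hmonic
      (dvd_iff_isRoot.2 (eval_one_flowPolynomial hlinks)) ?_)
    rw [natDegree_X_sub_C, hnatDegree, hd]
  · obtain ⟨v, hv⟩ := h.exists_degree_eq_three hdeg (by omega)
    rw [hd, pow_one]
    refine (eq_of_monic_of_dvd_of_natDegree_le ((monic_X_sub_C 1).mul (monic_X_sub_C 2)) hmonic
      (X_sub_one_mul_X_sub_two_dvd_flowPolynomial (v := v) (by rw [hv]; decide)) ?_)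
    rw [(monic_X_sub_C 1).natDegree_mul (monic_X_sub_C 2), natDegree_X_sub_C, natDegree_X_sub_C,
      hnatDegree, hd]

omit [Fintype V] in
lemma degree_dipole {A : Finset V} (p : Prop) : (G.dipole A).degree p = #(G.cut A) := by
  rw [degree]
  congr 1
  ext e
  by_cases hp : p <;> simp [mem_cut, dipole, map, hp, not_iff_not]

lemma EdgeConnected.flowPolynomial_dipole {A : Finset V} (h : G.EdgeConnected 2)
    (hA : A.Nonempty) (hA' : A ≠ univ) (hcut : #(G.cut A) ≤ 3) :
    (G.dipole A).flowPolynomial = (X - C 1) * (X - C 2) ^ (#(G.cut A) - 2) := by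
  have hsurj : (· ∈ A).Surjective := fun p => by
    obtain ⟨v, hv⟩ := hA
    obtain ⟨w, hw⟩ : ∃ w, w ∉ A := by simpa [eq_univ_iff_forall] using hA'
    by_cases hp : p
    · exact ⟨v, propext (iff_of_true hv hp)⟩
    · exact ⟨w, propext (iff_of_false hw hp)⟩
  have hdipole : (G.dipole A).EdgeConnected 2 := h.map hsurj
  have hd := (hdipole.mono one_le_two).cyclomaticNumber_add_card
  rw [links_dipole, Fintype.card_prop] at hd
  rw [hdipole.flowPolynomial_of_cyclomaticNumber_le_two (fun p => (degree_dipole p).trans_le hcut)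
    (by omega)]
  congr 2
  omega

/-! ### Essentially 4-edge-connected cubic multigraphs -/

lemma sum_map_sub_sq {R : Type*} [CommRing R] (s : Multiset R) (a : R) :
    (s.map fun x => (x - a) ^ 2).sum =
      s.sum ^ 2 - 2 * s.esymm 2 - 2 * a * s.sum + s.card * a ^ 2 := by
  induction s using Multiset.induction_on with
  | empty => simp [Multiset.esymm, Multiset.powersetCard_zero_right]
  | cons x s ih =>
    have hesymm : (x ::ₘ s).esymm 2 = s.esymm 2 + x * s.sum := by
      simpa [Multiset.esymm, Multiset.powersetCard_cons, Multiset.powersetCard_one,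
        Function.comp_def] using Multiset.sum_map_mul_left (s := s) (a := x) (f := fun y => y)
    rw [hesymm, Multiset.map_cons, Multiset.sum_cons, Multiset.sum_cons, Multiset.card_cons, ih]
    push_cast
    ring

lemma sum_roots_sub_sq {K : Type*} [Field K] {p : K[X]} (hp : p.Monic) (hs : p.Splits)
    (hd : 2 ≤ p.natDegree) (a : K) :
    (p.roots.map fun x => (x - a) ^ 2).sum =
      p.coeff (p.natDegree - 1) ^ 2 - 2 * p.coeff (p.natDegree - 2)
        + 2 * a * p.coeff (p.natDegree - 1) + p.natDegree * a ^ 2 := by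
  have hsum := coeff_eq_esymm_roots_of_splits hs (k := p.natDegree - 1) (by omega)
  have hesymm := coeff_eq_esymm_roots_of_splits hs (k := p.natDegree - 2) (by omega)
  rw [hp.leadingCoeff, Nat.sub_sub_self (by omega)] at hsum hesymm
  have hone : p.roots.esymm 1 = p.roots.sum := by
    simp [Multiset.esymm, Multiset.powersetCard_one]
  rw [sum_map_sub_sq, hsum, hesymm, hone, hs.natDegree_eq_card_roots]
  ring

variable (G) in
/-- Every cut with at least two vertices on either side has at least `k` edges. -/
def EssentiallyEdgeConnected (k : ℕ) : Prop :=
  ∀ S : Finset V, 2 ≤ #S → 2 ≤ #Sᶜ → k ≤ #(G.cut S)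

lemma EssentiallyEdgeConnected.exists_cut_eq_cut_singleton {k : ℕ}
    (h : G.EssentiallyEdgeConnected k) {S : Finset V} (hS : (G.cut S).Nonempty)
    (hcut : #(G.cut S) < k) : ∃ v, G.cut S = G.cut {v} := by
  obtain ⟨hne, huniv⟩ := nonempty_and_ne_univ_of_cut_nonempty hS
  have hcompl : Sᶜ.Nonempty := by rwa [nonempty_iff_ne_empty, Ne, compl_eq_empty_iff]
  rcases (one_le_card.2 hne).eq_or_lt' with hone | htwo
  · obtain ⟨v, rfl⟩ := card_eq_one.1 hone
    exact ⟨v, rfl⟩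
  rcases (one_le_card.2 hcompl).eq_or_lt' with hone | htwo'
  · obtain ⟨v, hv⟩ := card_eq_one.1 hone
    exact ⟨v, by rw [← hv, cut_compl]⟩
  · exact absurd (h S htwo htwo') hcut.not_ge

lemma EssentiallyEdgeConnected.edgeConnected_three (h : G.EssentiallyEdgeConnected 4)
    (hG : G.EdgeConnected 1) (hcubic : ∀ v, G.degree v = 3) : G.EdgeConnected 3 := by
  intro S hS hS'
  by_contra! hlt
  obtain ⟨v, hv⟩ := h.exists_cut_eq_cut_singleton (card_pos.1 (hG S hS hS')) (by omega)
  have := hcubic v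
  rw [degree, ← hv] at this
  omega

lemma cut_singleton_injective (hG : G.EdgeConnected 1) (hn : 2 < Fintype.card V) :
    (fun v => G.cut {v}).Injective := by
  intro u v huv
  by_contra hne
  have hpos : 1 ≤ #(G.cut {u, v}) := hG _ (insert_nonempty u {v}) fun h => by
    have hle := card_le_two (a := u) (b := v)
    rw [h, card_univ] at hle
    exact hle.not_gt hn
  have hpair := G.card_cut_pair hne
  rw [degree, degree, show G.cut {u} = G.cut {v} from huv, inter_self] at hpair
  omega

lemma EssentiallyEdgeConnected.card_cuts_three (h : G.EssentiallyEdgeConnected 4)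
    (hG : G.EdgeConnected 1) (hcubic : ∀ v, G.degree v = 3) (hn : 2 < Fintype.card V) :
    #{Y ∈ univ.image G.cut | #Y = 3} = Fintype.card V := by
  have hstars : {Y ∈ univ.image G.cut | #Y = 3} = univ.image fun v => G.cut {v} := by
    ext Y
    simp only [mem_filter, mem_image, mem_univ, true_and]
    constructor
    · rintro ⟨⟨S, rfl⟩, hS⟩
      obtain ⟨v, hv⟩ := h.exists_cut_eq_cut_singleton (S := S) (card_pos.1 (by omega)) (by omega)
      exact ⟨v, hv.symm⟩
    · rintro ⟨v, rfl⟩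
      exact ⟨⟨{v}, rfl⟩, hcubic v⟩
  rw [hstars, card_image_of_injective _ (cut_singleton_injective hG hn), card_univ]

lemma EssentiallyEdgeConnected.sum_roots_sub_three_sq (h : G.EssentiallyEdgeConnected 4)
    (hG : G.EdgeConnected 1) (hcubic : ∀ v, G.degree v = 3) (hn : 2 < Fintype.card V)
    {K : Type*} [Field K] [CharZero K]
    (hs : (G.flowPolynomial.map (Int.castRingHom K)).Splits) :
    ((G.flowPolynomial.map (Int.castRingHom K)).roots.map fun x => (x - 3) ^ 2).sum =
      9 - (Fintype.card V : K) := by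
  have hnonempty : Nonempty V := Fintype.card_pos_iff.1 (by omega)
  have hG3 := h.edgeConnected_three hG hcubic
  have hG2 := hG3.mono (by norm_num : 2 ≤ 3)
  have hd := hG.cyclomaticNumber_add_card
  have hm : Fintype.card V * 3 = 2 * #G.links := by simpa [hcubic] using G.sum_degree
  have hnatDegree : (G.flowPolynomial.map (Int.castRingHom K)).natDegree = G.cyclomaticNumber := by
    rw [hG2.monic_flowPolynomial.natDegree_map, hG2.natDegree_flowPolynomial]
  rw [sum_roots_sub_sq (hG2.monic_flowPolynomial.map _) hs (by omega), hnatDegree,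
    coeff_map, coeff_map, hG3.coeff_flowPolynomial_sub_one (by omega),
    hG3.coeff_flowPolynomial_sub_two (by omega), h.card_cuts_three hG hcubic hn]
  have hdK : (G.cyclomaticNumber + Fintype.card V : K) = #G.links + 1 := by exact_mod_cast hd
  have hmK : (Fintype.card V * 3 : K) = 2 * #G.links := by exact_mod_cast hm
  simp only [map_neg, map_sub, map_natCast, Nat.cast_choose_two]
  linear_combination 9 * hdK - 2 * hmK

lemma EssentiallyEdgeConnected.exists_flowPolynomial_eq_mul (h : G.EssentiallyEdgeConnected 4)
    (hG : G.EdgeConnected 1) (hcubic : ∀ v, G.degree v = 3) (hn : 2 < Fintype.card V)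
    {K : Type*} [Field K] [CharZero K]
    (hs : (G.flowPolynomial.map (Int.castRingHom K)).Splits) :
    ∃ q : ℤ[X], q.Monic ∧ G.flowPolynomial = (X - C 1) * (X - C 2) * q ∧
      ((q.map (Int.castRingHom K)).roots.map fun x => (x - 3) ^ 2).sum =
        4 - (Fintype.card V : K) := by
  have hmonic := ((h.edgeConnected_three hG hcubic).mono (by norm_num : 2 ≤ 3)).monic_flowPolynomial
  have hsum := h.sum_roots_sub_three_sq hG hcubic hn hs
  obtain ⟨v⟩ : Nonempty V := Fintype.card_pos_iff.1 (by omega)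
  obtain ⟨q, hq⟩ := X_sub_one_mul_X_sub_two_dvd_flowPolynomial (v := v) (by rw [hcubic]; decide)
  have hprod : ((X - C 1) * (X - C 2) : ℤ[X]).Monic := (monic_X_sub_C 1).mul (monic_X_sub_C 2)
  have hqmonic : q.Monic := hprod.of_mul_monic_left (hq ▸ hmonic)
  refine ⟨q, hqmonic, hq, ?_⟩
  rw [hq, Polynomial.map_mul, roots_mul (mul_ne_zero (hprod.map _).ne_zero (hqmonic.map _).ne_zero),
    Polynomial.map_mul, Polynomial.map_sub, Polynomial.map_sub, map_X, map_C, map_C,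
    roots_mul (mul_ne_zero (X_sub_C_ne_zero _) (X_sub_C_ne_zero _)), roots_X_sub_C,
    roots_X_sub_C] at hsum
  simp only [Multiset.map_add, Multiset.map_singleton, Multiset.sum_add, Multiset.sum_singleton,
    map_one, map_ofNat] at hsum
  linear_combination hsum

lemma EssentiallyEdgeConnected.flowPolynomial_eq (h : G.EssentiallyEdgeConnected 4)
    (hG : G.EdgeConnected 1) (hcubic : ∀ v, G.degree v = 3) (hn : 2 < Fintype.card V)
    (hs : (G.flowPolynomial.map (Int.castRingHom ℝ)).Splits) :
    Fintype.card V = 4 ∧ G.flowPolynomial = (X - C 1) * (X - C 2) * (X - C 3) := by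
  have hnonempty : Nonempty V := Fintype.card_pos_iff.1 (by omega)
  obtain ⟨q, hqmonic, hq, hsum⟩ := h.exists_flowPolynomial_eq_mul hG hcubic hn hs
  have hle : (Fintype.card V : ℝ) ≤ 4 := by
    rw [← sub_nonneg, ← hsum]
    exact Multiset.sum_nonneg fun x hx => by
      obtain ⟨y, -, rfl⟩ := Multiset.mem_map.1 hx
      exact sq_nonneg _
  have hm : Fintype.card V * 3 = 2 * #G.links := by simpa [hcubic] using G.sum_degree
  have hn4 : Fintype.card V = 4 := by
    have : Fintype.card V ≤ 4 := by exact_mod_cast hle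
    omega
  have hqdeg : q.natDegree = 1 := by
    have hdeg := ((h.edgeConnected_three hG hcubic).mono (by norm_num :
      2 ≤ 3)).natDegree_flowPolynomial
    rw [hq, ((monic_X_sub_C 1).mul (monic_X_sub_C 2)).natDegree_mul hqmonic,
      (monic_X_sub_C 1).natDegree_mul (monic_X_sub_C 2), natDegree_X_sub_C,
      natDegree_X_sub_C] at hdeg
    have := hG.cyclomaticNumber_add_card
    omega
  have hqX : q = X + C (q.coeff 0) := hqmonic.eq_X_add_C hqdeg
  have hcoeff : q.coeff 0 = -3 := by
    rw [hqX, Polynomial.map_add, map_X, map_C, roots_X_add_C, hn4] at hsum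
    simp only [Multiset.map_singleton, Multiset.sum_singleton, Nat.cast_ofNat, sub_self,
      sq_eq_zero_iff, eq_intCast] at hsum
    have : (q.coeff 0 : ℝ) = -3 := by linarith
    exact_mod_cast this
  refine ⟨hn4, ?_⟩
  rw [hq, hqX, hcoeff, C_neg, sub_eq_add_neg X (C 3)]

/-! ### Reduction along small cuts -/

variable (G) in
/-- A cut with at most three edges and at least two vertices on either side, having the fewest
edges among all cuts with at least two vertices on either side. -/
structure IsReducingCut (A : Finset V) : Prop where
  two_le_card : 2 ≤ #A
  two_le_card_compl : 2 ≤ #Aᶜ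
  card_cut_le_three : #(G.cut A) ≤ 3
  card_cut_le : ∀ S : Finset V, 2 ≤ #S → 2 ≤ #Sᶜ → #(G.cut A) ≤ #(G.cut S)

namespace IsReducingCut

variable {A : Finset V}

lemma compl (hA : G.IsReducingCut A) : G.IsReducingCut Aᶜ where
  two_le_card := hA.two_le_card_compl
  two_le_card_compl := by rw [compl_compl]; exact hA.two_le_card
  card_cut_le_three := by rw [cut_compl]; exact hA.card_cut_le_three
  card_cut_le := by rw [cut_compl]; exact hA.card_cut_le

lemma nonempty (hA : G.IsReducingCut A) : A.Nonempty :=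
  card_pos.1 (zero_lt_two.trans_le hA.two_le_card)

lemma ne_univ (hA : G.IsReducingCut A) : A ≠ univ := by
  rintro rfl
  simpa using hA.two_le_card_compl

lemma card_option_lt (hA : G.IsReducingCut A) : Fintype.card (Option A) < Fintype.card V := by
  rw [Fintype.card_option, Fintype.card_coe, ← card_add_card_compl A]
  have := hA.two_le_card_compl
  omega

lemma flowPolynomial_contract_mul (hA : G.IsReducingCut A) (h : G.EdgeConnected 2) :
    (G.contract A).flowPolynomial * (G.contract Aᶜ).flowPolynomial =
      G.flowPolynomial * ((X - C 1) * (X - C 2) ^ (#(G.cut A) - 2)) := by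
  rw [← flowPolynomial_mul_flowPolynomial_dipole hA.card_cut_le_three,
    h.flowPolynomial_dipole hA.nonempty hA.ne_univ hA.card_cut_le_three]

end IsReducingCut

lemma EdgeConnected.contract {k : ℕ} (h : G.EdgeConnected k) {A : Finset V} (hA : A ≠ univ) :
    (G.contract A).EdgeConnected k :=
  h.map (contractMap_surjective hA)

lemma essentiallyEdgeConnected_four_or_exists_isReducingCut :
    G.EssentiallyEdgeConnected 4 ∨ ∃ A, G.IsReducingCut A := by
  rw [or_iff_not_imp_left]
  intro h
  simp only [EssentiallyEdgeConnected, not_forall, not_le] at h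
  obtain ⟨S, hS, hS', hlt⟩ := h
  obtain ⟨A, hA, hmin⟩ := exists_min_image {T : Finset V | 2 ≤ #T ∧ 2 ≤ #Tᶜ} (fun T => #(G.cut T))
    ⟨S, by simp [hS, hS']⟩
  simp only [mem_filter_univ, and_imp] at hA hmin
  exact ⟨A, hA.1, hA.2, (hmin S hS hS').trans (Nat.le_of_lt_succ hlt), hmin⟩

lemma EssentiallyEdgeConnected.degree_eq_three (h : G.EssentiallyEdgeConnected 4)
    (hG : G.EdgeConnected 2) (hdeg : ∀ v, G.degree v ≤ 3) (hn : 4 ≤ Fintype.card V) (u : V) :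
    G.degree u = 3 := by
  have : Nontrivial V := Fintype.one_lt_card_iff_nontrivial.1 (by omega)
  by_contra hu
  have htwo := hG.le_degree u
  obtain ⟨e, he⟩ : (G.cut {u}).Nonempty := card_pos.1 (by rw [degree] at htwo; omega)
  obtain ⟨v, hvu, hev⟩ : ∃ v, u ≠ v ∧ e ∈ G.cut {v} := by
    simp only [mem_cut, mem_singleton] at he ⊢
    by_cases hfst : G.fst e = u
    · exact ⟨G.snd e, by grind⟩
    · exact ⟨G.fst e, by grind⟩
  have hcommon : 0 < #(G.cut {u} ∩ G.cut {v}) := card_pos.2 ⟨e, mem_inter.2 ⟨he, hev⟩⟩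
  have hpair := card_cut_pair (G := G) hvu
  have hcut := h {u, v} (card_pair hvu).ge (by rw [card_compl, card_pair hvu]; omega)
  have := hdeg u
  have := hdeg v
  omega

variable (G) in
/-- The class of multigraphs in which the induction on the number of vertices takes place: it is
closed under contracting either side of a reducing cut. -/
structure IsTame : Prop where
  nontrivial : Nontrivial V
  edgeConnected : G.EdgeConnected 2
  degree_le : ∀ v, G.degree v ≤ 3
  splits : (G.flowPolynomial.map (Int.castRingHom ℝ)).Splits

namespace IsTame

lemma contract (h : G.IsTame) {A : Finset V} (hA : G.IsReducingCut A) :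
    (G.contract A).IsTame where
  nontrivial := by
    obtain ⟨v, hv⟩ := hA.nonempty
    exact ⟨none, some ⟨v, hv⟩, by simp⟩
  edgeConnected := h.edgeConnected.contract hA.ne_univ
  degree_le := by
    rintro (_ | v)
    · rw [degree, cut_contract_none]
      exact hA.card_cut_le_three
    · rw [degree, cut_contract_some]
      exact h.degree_le v
  splits := by
    have hmonic := ((monic_X_sub_C (1 : ℤ)).mul ((monic_X_sub_C 2).pow (#(G.cut A) - 2)))
    have hdipole : (((X - C 1) * (X - C 2) ^ (#(G.cut A) - 2) : ℤ[X]).map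
        (Int.castRingHom ℝ)).Splits := by
      simpa only [Polynomial.map_mul, Polynomial.map_pow, Polynomial.map_sub, map_X, map_C] using
        (Splits.X_sub_C _).mul ((Splits.X_sub_C _).pow _)
    have hsplits := h.splits.mul hdipole
    rw [← Polynomial.map_mul] at hsplits
    refine hsplits.of_dvd ?_ (Polynomial.map_dvd _
      (Dvd.intro _ (hA.flowPolynomial_contract_mul h.edgeConnected)))
    exact ((h.edgeConnected.monic_flowPolynomial.mul hmonic).map _).ne_zero

lemma trichotomy (h : G.IsTame) :
    G.cyclomaticNumber ≤ 2 ∨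
      (Fintype.card V = 4 ∧ G.flowPolynomial = (X - C 1) * (X - C 2) * (X - C 3)) ∨
      ∃ A, G.IsReducingCut A := by
  have := h.nontrivial
  rcases le_or_gt G.cyclomaticNumber 2 with hd | hd
  · exact .inl hd
  rcases G.essentiallyEdgeConnected_four_or_exists_isReducingCut with hess | hA
  · have hG := h.edgeConnected.mono one_le_two
    have hsum := sum_le_card_nsmul univ G.degree 3 fun v _ => h.degree_le v
    rw [sum_degree, card_univ, smul_eq_mul] at hsum
    have hn : 4 ≤ Fintype.card V := by
      have := hG.cyclomaticNumber_add_card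
      omega
    exact .inr (.inl (hess.flowPolynomial_eq hG
      (hess.degree_eq_three h.edgeConnected h.degree_le hn) (by omega) h.splits))
  · exact .inr (.inr hA)

universe u in
theorem induction {V : Type u} [Fintype V] {G : Multigraph V E}
    {motive : ∀ {V : Type u} [Fintype V], Multigraph V E → Prop}
    (small : ∀ {V : Type u} [Fintype V] {G : Multigraph V E},
      G.IsTame → G.cyclomaticNumber ≤ 2 → motive G)
    (tetrahedral : ∀ {V : Type u} [Fintype V] {G : Multigraph V E},
      G.flowPolynomial = (X - C 1) * (X - C 2) * (X - C 3) → motive G)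
    (glue : ∀ {V : Type u} [Fintype V] {G : Multigraph V E} {A : Finset V},
      G.IsTame → G.IsReducingCut A → motive (G.contract A) → motive (G.contract Aᶜ) → motive G)
    (h : G.IsTame) : motive G := by
  rcases h.trichotomy with hd | ⟨-, hP⟩ | ⟨A, hA⟩
  · exact small h hd
  · exact tetrahedral hP
  · exact glue h hA (induction small tetrahedral glue (h.contract hA))
      (induction small tetrahedral glue (h.contract hA.compl))
termination_by Fintype.card V
decreasing_by
  · exact hA.card_option_lt
  · exact hA.compl.card_option_lt

theorem exists_flowPolynomial_eq (h : G.IsTame) :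
    ∃ α β : ℕ, G.flowPolynomial = (X - C 1) * (X - C 2) ^ α * (X - C 3) ^ β := by
  refine h.induction (motive := fun G => ∃ α β : ℕ, G.flowPolynomial =
    (X - C 1) * (X - C 2) ^ α * (X - C 3) ^ β) ?_ ?_ ?_
  · intro V _ G h hd
    have := h.nontrivial
    exact ⟨_, 0, by simpa using
      h.edgeConnected.flowPolynomial_of_cyclomaticNumber_le_two h.degree_le hd⟩
  · intro V _ G hP
    exact ⟨1, 1, by simpa using hP⟩
  · rintro V _ G A h hA ⟨α₁, β₁, h₁⟩ ⟨α₂, β₂, h₂⟩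
    have hprod := hA.flowPolynomial_contract_mul h.edgeConnected
    have hle : #(G.cut A) - 2 ≤ α₁ + α₂ := by
      have := hA.card_cut_le_three
      by_contra! hlt
      have heval := congrArg (eval 2) hprod
      rw [h₁, h₂, show α₁ = 0 by omega, show α₂ = 0 by omega,
        show #(G.cut A) - 2 = 1 by omega] at heval
      simp at heval
    obtain ⟨α, hα⟩ := Nat.exists_eq_add_of_le hle
    refine ⟨α, β₁ + β₂, ?_⟩
    have hne : ((X - C 1) * (X - C 2) ^ (#(G.cut A) - 2) : ℤ[X]) ≠ 0 :=
      mul_ne_zero (X_sub_C_ne_zero _) (pow_ne_zero _ (X_sub_C_ne_zero _))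
    refine mul_right_cancel₀ hne ?_
    have hpow : ((X - C 2) ^ α₁ * (X - C 2) ^ α₂ : ℤ[X]) =
        (X - C 2) ^ (#(G.cut A) - 2) * (X - C 2) ^ α := by rw [← pow_add, hα, pow_add]
    rw [← hprod, h₁, h₂, pow_add]
    linear_combination (X - C 1) ^ 2 * (X - C 3) ^ β₁ * (X - C 3) ^ β₂ * hpow

end IsTame

/-! ### The root three -/

variable (G) in
/-- All vertices other than the root `r` have degree three, and any two vertices are separated
from the rest by at least three edges. Contracting the side of a reducing cut that contains the
root yields such a multigraph again, rooted at the new vertex. -/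
structure IsRootedCubic (r : V) : Prop where
  degree_eq_three : ∀ v, v ≠ r → G.degree v = 3
  three_le_card_cut : ∀ S : Finset V, #S = 2 → 3 ≤ #(G.cut S)

lemma IsRootedCubic.three_le_cyclomaticNumber [Nontrivial V] {r : V} (hr : G.IsRootedCubic r)
    (h : G.EdgeConnected 2) (hn : 4 ≤ Fintype.card V) : 3 ≤ G.cyclomaticNumber := by
  have hsum := G.sum_degree
  rw [← add_sum_erase _ _ (mem_univ r), sum_congr rfl fun v hv =>
    hr.degree_eq_three v (ne_of_mem_erase hv), sum_const, card_erase_of_mem (mem_univ r),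
    card_univ, smul_eq_mul] at hsum
  have := h.le_degree r
  have := (h.mono one_le_two).cyclomaticNumber_add_card
  omega

namespace IsReducingCut

variable {A : Finset V}

/-- By parity, removing a vertex from `A` changes the size of the cut, which cannot drop by
minimality. -/
lemma three_le_card_cut_erase (hA : G.IsReducingCut A) (h : G.EdgeConnected 2)
    (hdeg : ∀ v ∈ A, G.degree v = 3) {v : V} (hv : v ∈ A) : 3 ≤ #(G.cut (A.erase v)) := by
  have hparity := card_cut_modEq_card hdeg
  have hparity' := G.card_cut_modEq_card (S := A.erase v) fun w hw => hdeg w (mem_of_mem_erase hw)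
  have htwo := h A hA.nonempty hA.ne_univ
  have hcard := hA.two_le_card
  have hthree := hA.card_cut_le_three
  have herase := card_erase_of_mem hv
  have hcompl := card_le_card (compl_subset_compl.2 (erase_subset v A))
  have hcard' := hA.two_le_card_compl
  have herase_two : 2 ≤ #(G.cut (A.erase v)) := h _ (card_pos.1 (by omega)) fun huniv => by
    rw [huniv, compl_univ, card_empty] at hcompl
    omega
  have hmin := hA.card_cut_le (A.erase v)
  unfold Nat.ModEq at hparity hparity'
  omega

lemma isRootedCubic_contract (hA : G.IsReducingCut A) (h : G.EdgeConnected 2)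
    (hdeg : ∀ v ∈ A, G.degree v = 3) (hpair : ∀ S : Finset V, #S = 2 → 3 ≤ #(G.cut S)) :
    (G.contract A).IsRootedCubic none where
  degree_eq_three
    | none, hne => absurd rfl hne
    | some v, _ => by rw [degree, cut_contract_some]; exact hdeg v v.2
  three_le_card_cut := by
    have hnone : ∀ v : A, 3 ≤ #((G.contract A).cut {none, some v}) := fun v => by
      rw [contract, cut_map (T := (A.erase v)ᶜ) fun w => by
        simp [contractMap_eq_none_iff, contractMap_eq_some_iff, or_comm],
        cut_compl]
      exact hA.three_le_card_cut_erase h hdeg v.2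
    intro S hS
    obtain ⟨x, y, hxy, rfl⟩ := card_eq_two.1 hS
    match x, y with
    | none, none => exact absurd rfl hxy
    | none, some v => exact hnone v
    | some u, none => exact pair_comm none (some u) ▸ hnone u
    | some u, some v =>
      rw [contract, cut_map (T := {u.1, v.1}) fun w => by simp [contractMap_eq_some_iff]]
      exact hpair _ (card_pair fun heq => hxy (congrArg some (Subtype.ext heq)))

lemma four_le_card_option (hA : G.IsReducingCut A) (hdeg : ∀ v ∈ A, G.degree v = 3)
    (hpair : ∀ S : Finset V, #S = 2 → 3 ≤ #(G.cut S)) : 4 ≤ Fintype.card (Option A) := by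
  rw [Fintype.card_option, Fintype.card_coe]
  have hparity := card_cut_modEq_card hdeg
  have htwo := hA.two_le_card
  by_contra! hlt
  have hcard : #A = 2 := by omega
  have := hpair A hcard
  have := hA.card_cut_le_three
  unfold Nat.ModEq at hparity
  omega

omit [Fintype V] in
lemma not_X_sub_three_dvd_dipole :
    ¬ (X - C 3 : ℤ[X]) ∣ (X - C 1) * (X - C 2) ^ (#(G.cut A) - 2) := by
  rw [dvd_iff_isRoot, IsRoot, eval_mul, eval_pow]
  simp

end IsReducingCut

namespace IsTame

theorem X_sub_three_dvd_flowPolynomial {r : V} (h : G.IsTame) (hr : G.IsRootedCubic r)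
    (hn : 4 ≤ Fintype.card V) : X - C 3 ∣ G.flowPolynomial := by
  refine h.induction (motive := fun {V} _ G => ∀ r : V, G.IsRootedCubic r → 4 ≤ Fintype.card V →
    X - C 3 ∣ G.flowPolynomial) ?_ ?_ ?_ r hr hn
  · intro V _ G h hd r hr hn
    have := h.nontrivial
    exact absurd (hr.three_le_cyclomaticNumber h.edgeConnected hn) (by omega)
  · intro V _ G hP _ _ _
    exact hP ▸ dvd_mul_left _ _
  · intro V _ G A h hA ih ih' r hr _
    have hside : ∀ B : Finset V, G.IsReducingCut B → r ∉ B →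
        (G.contract B).IsRootedCubic none ∧ 4 ≤ Fintype.card (Option B) := fun B hB hrB => by
      have hdeg : ∀ v ∈ B, G.degree v = 3 := fun v hv =>
        hr.degree_eq_three v (ne_of_mem_of_not_mem hv hrB)
      exact ⟨hB.isRootedCubic_contract h.edgeConnected hdeg hr.three_le_card_cut,
        hB.four_le_card_option hdeg hr.three_le_card_cut⟩
    refine ((prime_X_sub_C 3).dvd_or_dvd ?_).resolve_right
      (IsReducingCut.not_X_sub_three_dvd_dipole (G := G) (A := A))
    rw [← hA.flowPolynomial_contract_mul h.edgeConnected]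
    by_cases hrA : r ∈ A
    · obtain ⟨hrooted, hcard⟩ := hside Aᶜ hA.compl (by simpa using hrA)
      exact (ih' none hrooted hcard).mul_left _
    · obtain ⟨hrooted, hcard⟩ := hside A hA hrA
      exact (ih none hrooted hcard).mul_right _

theorem X_sub_three_sq_dvd_flowPolynomial (h : G.IsTame) (hcubic : ∀ v, G.degree v = 3)
    (hpair : ∀ S : Finset V, #S = 2 → 3 ≤ #(G.cut S)) (hn : 4 < Fintype.card V) :
    (X - C 3) ^ 2 ∣ G.flowPolynomial := by
  have := h.nontrivial
  obtain ⟨r⟩ : Nonempty V := inferInstance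
  have hcyc := IsRootedCubic.three_le_cyclomaticNumber (r := r)
    ⟨fun v _ => hcubic v, hpair⟩ h.edgeConnected hn.le
  rcases h.trichotomy with hd | ⟨hcard, -⟩ | ⟨A, hA⟩
  · omega
  · omega
  have hside : ∀ B : Finset V, G.IsReducingCut B → X - C 3 ∣ (G.contract B).flowPolynomial :=
    fun B hB => (h.contract hB).X_sub_three_dvd_flowPolynomial
      (hB.isRootedCubic_contract h.edgeConnected (fun v _ => hcubic v) hpair)
      (hB.four_le_card_option (fun v _ => hcubic v) hpair)
  refine (prime_X_sub_C 3).pow_dvd_of_dvd_mul_right _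
    (IsReducingCut.not_X_sub_three_dvd_dipole (G := G) (A := A)) ?_
  rw [← hA.flowPolynomial_contract_mul h.edgeConnected, sq]
  exact mul_dvd_mul (hside A hA) (hside Aᶜ hA.compl)

end IsTame

/-! ### Coefficients -/

lemma coeff_mul_X_add_C_pow_le {R : Type*} [Semiring R] [PartialOrder R] [IsOrderedRing R]
    [CanonicallyOrderedAdd R] (p : R[X]) {a b : R} (h : a ≤ b) (k i : ℕ) :
    (p * (X + C a) ^ k).coeff i ≤ (p * (X + C b) ^ k).coeff i := by
  simp only [coeff_mul, coeff_X_add_C_pow]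
  gcongr

lemma abs_coeff_neg_one_pow_mul_comp_neg_X (q : ℕ[X]) (k i : ℕ) :
    |((-1) ^ k * (q.map (Nat.castRingHom ℤ)).comp (-X)).coeff i| = q.coeff i := by
  have hneg : (-X : ℤ[X]) = C (-1) * X := by simp
  rw [← C_1, ← C_neg, ← C_pow, coeff_C_mul, hneg, comp_C_mul_X_coeff, coeff_map]
  simp [abs_mul]

lemma abs_coeff_mul_X_sub_C_pow (α β i : ℕ) :
    |((X - C 1) * (X - C 2) ^ α * (X - C 3) ^ β : ℤ[X]).coeff i| =
      ((X + C 1) * (X + C 2) ^ α * (X + C 3) ^ β : ℕ[X]).coeff i := by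
  rw [← abs_coeff_neg_one_pow_mul_comp_neg_X _ (1 + α + β)]
  congr 2
  have hneg : ∀ a : ℕ, X - C (a : ℤ) = -1 * ((X + C a).map (Nat.castRingHom ℤ)).comp (-X) :=
    fun a => by simp; ring
  have hone := hneg 1
  have htwo := hneg 2
  have hthree := hneg 3
  push_cast at hone htwo hthree
  rw [hone, htwo, hthree]
  simp only [Polynomial.map_mul, Polynomial.map_pow, mul_comp, pow_comp, mul_pow]
  ring

lemma coeff_le_abs_coeff_mul_X_sub_C_pow {α β : ℕ} (hβ : 2 ≤ β) (i : ℕ) :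
    ((X + 1) * (X + 2) ^ (α + β - 2) * (X + 3) ^ 2 : ℤ[X]).coeff i ≤
      |((X - C 1) * (X - C 2) ^ α * (X - C 3) ^ β : ℤ[X]).coeff i| := by
  obtain ⟨k, rfl⟩ := Nat.exists_eq_add_of_le' hβ
  have hcast : ((X + 1) * (X + 2) ^ (α + k) * (X + 3) ^ 2 : ℤ[X]) =
      ((X + C 1) * (X + C 2) ^ α * (X + C 3) ^ 2 * (X + C 2) ^ k : ℕ[X]).map
        (Nat.castRingHom ℤ) := by
    simp
    ring
  rw [← add_assoc, Nat.add_sub_cancel, hcast, coeff_map, abs_coeff_mul_X_sub_C_pow, add_comm k 2,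
    pow_add, ← mul_assoc, Nat.coe_castRingHom, Nat.cast_le]
  exact coeff_mul_X_add_C_pow_le _ (by norm_num) k i

lemma le_of_X_sub_C_three_pow_dvd {α β k : ℕ}
    (h : (X - C 3) ^ k ∣ ((X - C 1) * (X - C 2) ^ α * (X - C 3) ^ β : ℤ[X])) : k ≤ β := by
  have hprime : Prime (X - C 3 : ℤ[X]) := prime_X_sub_C 3
  have hndvd : ¬ (X - C 3 : ℤ[X]) ∣ (X - C 1) * (X - C 2) ^ α := by
    rw [dvd_iff_isRoot, IsRoot, eval_mul, eval_pow]
    simp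
  exact (pow_dvd_pow_iff hprime.ne_zero hprime.not_isUnit).1
    (hprime.pow_dvd_of_dvd_mul_left k hndvd h)

theorem IsTame.coeff_le_abs_coeff_flowPolynomial (h : G.IsTame) (hcubic : ∀ v, G.degree v = 3)
    (hpair : ∀ S : Finset V, #S = 2 → 3 ≤ #(G.cut S)) (hn : 4 < Fintype.card V) (i : ℕ) :
    ((X + 1) * (X + 2) ^ (Fintype.card V / 2 - 2) * (X + 3) ^ 2 : ℤ[X]).coeff i ≤
      |G.flowPolynomial.coeff i| := by
  have := h.nontrivial
  obtain ⟨α, β, hP⟩ := h.exists_flowPolynomial_eq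
  have hβ : 2 ≤ β :=
    le_of_X_sub_C_three_pow_dvd (hP ▸ h.X_sub_three_sq_dvd_flowPolynomial hcubic hpair hn)
  have hdeg : 1 + α + β = G.cyclomaticNumber := by
    rw [← h.edgeConnected.natDegree_flowPolynomial, hP,
      ((monic_X_sub_C 1).mul ((monic_X_sub_C 2).pow α)).natDegree_mul ((monic_X_sub_C 3).pow β),
      (monic_X_sub_C 1).natDegree_mul ((monic_X_sub_C 2).pow α)]
    simp only [natDegree_pow, natDegree_X_sub_C, mul_one]
  have hlinks : Fintype.card V * 3 = 2 * #G.links := by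
    rw [← G.sum_degree, sum_congr rfl fun v _ => hcubic v, sum_const, card_univ, smul_eq_mul]
  have hcyc := (h.edgeConnected.mono one_le_two).cyclomaticNumber_add_card
  rw [hP, show Fintype.card V / 2 - 2 = α + β - 2 by omega]
  exact coeff_le_abs_coeff_mul_X_sub_C_pow hβ i

/-! ### Simple graphs -/

/-- A simple graph as a multigraph indexed by its edge set, with the orientation chosen by
`Quot.out`. -/
noncomputable def ofSimpleGraph (H : SimpleGraph V) : Multigraph V H.edgeSet where
  fst e := (Quot.out e.1).1
  snd e := (Quot.out e.1).2

section OfSimpleGraph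

variable {H : SimpleGraph V}

omit [Fintype V] in
lemma mk_fst_snd_ofSimpleGraph (e : H.edgeSet) :
    s((ofSimpleGraph H).fst e, (ofSimpleGraph H).snd e) = e :=
  Quot.out_eq e.1

omit [Fintype V] in
lemma adj_fst_snd_ofSimpleGraph (e : H.edgeSet) :
    H.Adj ((ofSimpleGraph H).fst e) ((ofSimpleGraph H).snd e) := by
  rw [← SimpleGraph.mem_edgeSet, mk_fst_snd_ofSimpleGraph]
  exact e.2

lemma links_ofSimpleGraph : (ofSimpleGraph H).links = univ :=
  eq_univ_of_forall fun e => mem_links.2 (adj_fst_snd_ofSimpleGraph e).ne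

lemma mem_cut_ofSimpleGraph {S : Finset V} {v w : V} (h : H.Adj v w) :
    (⟨s(v, w), h⟩ : H.edgeSet) ∈ (ofSimpleGraph H).cut S ↔ ¬(v ∈ S ↔ w ∈ S) := by
  rw [mem_cut]
  obtain ⟨hfst, hsnd⟩ | ⟨hfst, hsnd⟩ := Sym2.eq_iff.1 (mk_fst_snd_ofSimpleGraph ⟨s(v, w), h⟩) <;>
    rw [hfst, hsnd]
  exact not_congr iff_comm

lemma mem_cut_singleton_ofSimpleGraph {e : H.edgeSet} {v : V} :
    e ∈ (ofSimpleGraph H).cut {v} ↔ v ∈ e.1 := by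
  obtain ⟨e, he⟩ := e
  induction e with | _ x y =>
  have hne : x ≠ y := he.ne
  rw [mem_cut_ofSimpleGraph he, mem_singleton, mem_singleton, Sym2.mem_iff]
  grind

lemma degree_ofSimpleGraph (v : V) :
    (ofSimpleGraph H).degree v = Nat.card (H.neighborSet v) := by
  have hmap : ((ofSimpleGraph H).cut {v}).map (Function.Embedding.subtype _) =
      H.incidenceFinset v := by
    ext e
    simp [mem_cut_singleton_ofSimpleGraph, SimpleGraph.incidenceSet, and_comm]
  rw [degree, ← card_map (Function.Embedding.subtype _), hmap,
    SimpleGraph.card_incidenceFinset_eq_degree, ← SimpleGraph.card_neighborSet_eq_degree,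
    Nat.card_eq_fintype_card]

lemma three_le_card_cut_ofSimpleGraph (h : ∀ v, (ofSimpleGraph H).degree v = 3) {S : Finset V}
    (hS : #S = 2) : 3 ≤ #((ofSimpleGraph H).cut S) := by
  obtain ⟨u, v, huv, rfl⟩ := card_eq_two.1 hS
  have hinter : #((ofSimpleGraph H).cut {u} ∩ (ofSimpleGraph H).cut {v}) ≤ 1 := by
    refine card_le_one.2 fun e he e' he' => Subtype.ext ?_
    simp only [mem_inter, mem_cut_singleton_ofSimpleGraph, Sym2.mem_and_mem_iff huv] at he he'
    rw [he, he']
  have hpair := (ofSimpleGraph H).card_cut_pair huv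
  rw [h, h] at hpair
  omega

theorem edgeConnected_ofSimpleGraph {k : ℕ} (h : H.IsEdgeConnected k) :
    (ofSimpleGraph H).EdgeConnected k := by
  intro S ⟨v, hv⟩ hS
  obtain ⟨w, hw⟩ : ∃ w, w ∉ S := by simpa [eq_univ_iff_forall] using hS
  by_contra! hlt
  obtain ⟨p⟩ := h v w (s := ((ofSimpleGraph H).cut S).map (Function.Embedding.subtype _)) (by
    rwa [Set.encard_coe_eq_coe_finsetCard, card_map, Nat.cast_lt])
  obtain ⟨d, -, hd, hd'⟩ := p.exists_boundary_dart S hv hw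
  obtain ⟨hadj, hmem⟩ := SimpleGraph.deleteEdges_adj.1 d.adj
  refine hmem (mem_coe.2 (mem_map.2 ⟨⟨_, hadj⟩, (mem_cut_ofSimpleGraph hadj).2 ?_, rfl⟩))
  exact fun hiff => hd' (hiff.1 hd)

omit [Fintype V] in
lemma isEdgeConnected_two_of_forall_not_isBridge (h : H.Preconnected)
    (hbridge : ∀ e, ¬ H.IsBridge e) : H.IsEdgeConnected 2 := by
  intro u v
  obtain ⟨p⟩ := h u v
  induction p with
  | nil => exact .rfl
  | cons hadj _ ih =>
    exact (not_not.1 ((SimpleGraph.isBridge_iff_not_isEdgeReachable_two hadj).not.1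
      (hbridge _))).trans ih

omit [Fintype V] in
lemma mem_range_funLeft_connectedComponentMk {R : Type*} [Semiring R] [AddCommMonoid M] [Module R M]
    {g : V → M} :
    g ∈ (LinearMap.funLeft R M H.connectedComponentMk).range ↔ ∀ v w, H.Adj v w → g v = g w := by
  refine ⟨?_, fun h => ⟨SimpleGraph.ConnectedComponent.lift g fun v w p _ => ?_, rfl⟩⟩
  · rintro ⟨f, rfl⟩ v w hvw
    exact congrArg f (SimpleGraph.ConnectedComponent.sound hvw.reachable)
  · clear * - h p
    induction p with
    | nil => rfl
    | cons hadj _ ih => exact (h _ _ hadj).trans ih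

lemma mem_potentials_ofSimpleGraph {Z : Finset H.edgeSet} {g : V → ZMod 2} :
    g ∈ (ofSimpleGraph H).potentials Z ↔ ∀ v w, (SimpleGraph.fromEdgeSet
      (Z.map (Function.Embedding.subtype _) : Set (Sym2 V))).Adj v w → g v = g w := by
  simp only [mem_potentials, SimpleGraph.fromEdgeSet_adj, mem_coe, mem_map]
  constructor
  · rintro h v w ⟨⟨e, he, hvw⟩, -⟩
    have heq := h e he
    obtain ⟨hfst, hsnd⟩ | ⟨hfst, hsnd⟩ :=
      Sym2.eq_iff.1 ((mk_fst_snd_ofSimpleGraph e).trans hvw) <;> rw [hfst, hsnd] at heq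
    exacts [heq, heq.symm]
  · exact fun h e he =>
      h _ _ ⟨⟨e, he, (mk_fst_snd_ofSimpleGraph e).symm⟩, (adj_fst_snd_ofSimpleGraph e).ne⟩

lemma finrank_potentials_ofSimpleGraph (Z : Finset H.edgeSet) :
    finrank (ZMod 2) ((ofSimpleGraph H).potentials Z) = Nat.card (SimpleGraph.fromEdgeSet
      (Z.map (Function.Embedding.subtype _) : Set (Sym2 V))).ConnectedComponent := by
  set K := SimpleGraph.fromEdgeSet (Z.map (Function.Embedding.subtype _) : Set (Sym2 V))
  have hsurj : K.connectedComponentMk.Surjective := Quot.mk_surjective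
  have hrange : (ofSimpleGraph H).potentials Z =
      (LinearMap.funLeft (ZMod 2) (ZMod 2) K.connectedComponentMk).range := by
    ext g
    rw [mem_potentials_ofSimpleGraph, mem_range_funLeft_connectedComponentMk]
  rw [hrange, LinearMap.finrank_range_of_inj (LinearMap.funLeft_injective_of_surjective _ _ _
    hsurj), finrank_fintype_fun_eq_card, Nat.card_eq_fintype_card]

omit [Fintype V] in
lemma flowPolynomial_eq_sum_powerset : G.flowPolynomial =
    ∑ Z ∈ G.links.powerset, (-1) ^ (#G.links - #Z) * X ^ finrank (ZMod 2) (G.cycleSpace Z) := by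
  refine sum_nbij' (G.links \ ·) (G.links \ ·) (fun _ _ => mem_powerset.2 sdiff_subset)
    (fun _ _ => mem_powerset.2 sdiff_subset)
    (fun Y hY => Finset.sdiff_sdiff_eq_self (mem_powerset.1 hY))
    (fun Y hY => Finset.sdiff_sdiff_eq_self (mem_powerset.1 hY)) fun Y hY => ?_
  rw [mem_powerset] at hY
  rw [card_sdiff_of_subset hY, Nat.sub_sub_self (card_le_card hY)]

theorem flowPolynomial_ofSimpleGraph {V : Type} [Fintype V] (H : SimpleGraph V) :
    (ofSimpleGraph H).flowPolynomial = flowPoly H := by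
  have hedges : H.edgeSet.toFinite.toFinset =
      (univ : Finset H.edgeSet).map (Function.Embedding.subtype _) := by
    ext e; simp
  rw [flowPolynomial_eq_sum_powerset, flowPoly, links_ofSimpleGraph, hedges, card_map]
  refine sum_nbij (Finset.map (Function.Embedding.subtype _)) ?_
    (map_injective _).injOn ?_ fun Z _ => ?_
  · exact fun Z hZ => mem_powerset.2 (map_subset_map.2 (mem_powerset.1 hZ))
  · intro Z hZ
    obtain ⟨Y, hY, rfl⟩ := subset_map_iff.1 (mem_powerset.1 hZ)
    exact ⟨Y, mem_powerset.2 hY, rfl⟩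
  · have hrank := finrank_cycleSpace_add_card (G := ofSimpleGraph H) Z
    rw [finrank_potentials_ofSimpleGraph] at hrank
    rw [card_map, ← hrank, Nat.add_sub_cancel, zsmul_eq_mul]
    norm_cast

lemma splits_of_forall_isRoot_im_eq_zero {p : ℝ[X]}
    (h : ∀ z : ℂ, (p.map Complex.ofRealHom).IsRoot z → z.im = 0) : p.Splits :=
  .of_splits_map Complex.ofRealHom (IsAlgClosed.splits _) fun z hz =>
    ⟨z.re, Complex.conj_eq_iff_re.1 (Complex.conj_eq_iff_im.2 (h z (isRoot_of_mem_roots hz)))⟩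

theorem isTame_ofSimpleGraph {V : Type} [Fintype V] [Nontrivial V] {H : SimpleGraph V}
    (h : H.IsEdgeConnected 2) (hdeg : ∀ v, Nat.card (H.neighborSet v) ≤ 3)
    (hreal : ∀ z : ℂ, ((flowPoly H).map (Int.castRingHom ℂ)).IsRoot z → z.im = 0) :
    (ofSimpleGraph H).IsTame where
  nontrivial := inferInstance
  edgeConnected := edgeConnected_ofSimpleGraph h
  degree_le v := (degree_ofSimpleGraph v).trans_le (hdeg v)
  splits := splits_of_forall_isRoot_im_eq_zero fun z hz => hreal z <| by
    rwa [flowPolynomial_ofSimpleGraph, Polynomial.map_map,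
      RingHom.ext_int (Complex.ofRealHom.comp _) (Int.castRingHom ℂ)] at hz

end OfSimpleGraph

end Multigraph

theorem stmt_4_general {V : Type} [Fintype V] (G : SimpleGraph V)
    (hconn : G.Connected) (hbridgeless : ∀ e : Sym2 V, ¬ G.IsBridge e)
    (hcubic : ∀ v : V, Nat.card (G.neighborSet v) = 3)
    (hreal : ∀ z : ℂ, ((flowPoly G).map (Int.castRingHom ℂ)).IsRoot z → z.im = 0)
    (hcard : 4 < Fintype.card V) (i : ℕ) :
    ((X + 1) * (X + 2) ^ (Fintype.card V / 2 - 2) * (X + 3) ^ 2 : ℤ[X]).coeff i ≤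
      |(flowPoly G).coeff i| := by
  classical
  have : Nontrivial V := Fintype.one_lt_card_iff_nontrivial.1 (by omega)
  have hdegree : ∀ v, (Multigraph.ofSimpleGraph G).degree v = 3 := fun v =>
    (Multigraph.degree_ofSimpleGraph v).trans (hcubic v)
  have htame : (Multigraph.ofSimpleGraph G).IsTame :=
    Multigraph.isTame_ofSimpleGraph
      (Multigraph.isEdgeConnected_two_of_forall_not_isBridge hconn.preconnected hbridgeless)
      (fun v => (hcubic v).le) hreal
  rw [← Multigraph.flowPolynomial_ofSimpleGraph]
  exact htame.coeff_le_abs_coeff_flowPolynomial hdegree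
    (fun _ => Multigraph.three_le_card_cut_ofSimpleGraph hdegree) hcard i

/-- Improved lower bound on the absolute values of the coefficients of the flow polynomial
of a connected bridgeless simple cubic graph (n ≥ 8) with only real flow roots. -/
theorem stmt_4 {V : Type} [Fintype V] (G : SimpleGraph V)
    (hconn : G.Connected) (hbridgeless : ∀ e : Sym2 V, ¬ G.IsBridge e)
    (hcubic : ∀ v : V, Nat.card (G.neighborSet v) = 3)
    (hreal : ∀ z : ℂ, ((flowPoly G).map (Int.castRingHom ℂ)).IsRoot z → z.im = 0)
    (n m : ℕ) (hn : n = Fintype.card V) (hm : m = edgeCount G) (hn8 : 8 ≤ n) :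
    ∀ i ≤ m - n + 1,
      ((X + 1) * (X + 2) ^ (n / 2 - 2) * (X + 3) ^ 2 : Polynomial ℤ).coeff i ≤
        |(flowPoly G).coeff i| := by
  subst hn
  exact fun i _ => stmt_4_general G hconn hbridgeless hcubic hreal (by omega) i
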